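/- The commuting variety C is a rational algebraic variety: there exist a dense open subset U of C, a dense open subset V of affine space A^{dim g + rk g}, and an isomorphism of varieties U ≅ V. -/

import Mathlib

noncomputable section

namespace CV

variable (k : Type*) [Field k] (V : Type*) [AddCommGroup V] [Module k V] [FiniteDimensional k V]

/-- Coordinates with respect to a chosen basis of `V`. -/
def coordFn (z : V) (i : Module.Free.ChooseBasisIndex k V) : k :=
  (Module.Free.chooseBasis k V).repr z i

/-- Evaluation of a polynomial (in the chosen coordinates) at a point of `V`. -/
def evalP (F : MvPolynomial (Module.Free.ChooseBasisIndex k V) k) (z : V) : k :=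
  MvPolynomial.aeval (coordFn k V z) F

/-- The Zariski topology on `V`: generated by complements of zero sets of polynomial
functions. -/
def zar : TopologicalSpace V :=
  TopologicalSpace.generateFrom
    {U | ∃ F : MvPolynomial (Module.Free.ChooseBasisIndex k V) k, U = {z | evalP k V F z ≠ 0}}

/-- The dimension of a subset of `V`:  the Krull dimension for the topology induced by the
Zariski topology of `V`. -/
def dimSet (S : Set V) : WithBot ℕ∞ :=
  @topologicalKrullDim S (TopologicalSpace.induced Subtype.val (zar k V))

/-- The differential at `z ∈ V` of a polynomial `F`, as a linear functional on `V`. -/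
def diffAt (F : MvPolynomial (Module.Free.ChooseBasisIndex k V) k) (z : V) : V →ₗ[k] k :=
  (Module.Free.chooseBasis k V).constr k fun i => evalP k V (MvPolynomial.pderiv i F) z

/-- The Zariski tangent space at `z` of a subset `S ⊆ V`:  the common kernel of the
differentials at `z` of all polynomial functions vanishing identically on `S`. -/
def tangent (S : Set V) (z : V) : Submodule k V :=
  ⨅ F ∈ {F | ∀ w ∈ S, evalP k V F w = 0}, LinearMap.ker (diffAt k V F z)

end CV

/-- The commuting variety `C = {(x,y) ∈ g × g | [x,y] = 0}`. -/
def commSet (k : Type*) (g : Type*) [Field k] [LieRing g] [LieAlgebra k g] : Set (g × g) :=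
  {p | ⁅p.1, p.2⁆ = 0}

/-- The centralizer `g_x = {y ∈ g | [x,y] = 0}` of an element `x` of a Lie algebra,
as a submodule. -/
def cent (k : Type*) {g : Type*} [Field k] [LieRing g] [LieAlgebra k g] (x : g) :
    Submodule k g := LinearMap.ker (LieAlgebra.ad k g x)

variable (k : Type*) [Field k] [IsAlgClosed k] [CharZero k]
variable (g : Type*) [LieRing g] [LieAlgebra k g] [FiniteDimensional k g]

/-!
Let `h` have a centralizer of the least possible dimension, which is the rank, and let `s` be a
generalized inverse of `ad h`. If `⁅x, y⁆ = 0`, then `T_x y := y + s ⁅x - h, y⁆ = y - s ⁅h, y⁆` lies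
in the centralizer `g_h`. When `T_x` is invertible, minimality of `dim g_h` shows that it maps `g_x`
onto `g_h`. So `(x, y) ↦ (x, y - s ⁅h, y⁆)` identifies the commuting pairs with `det T_x ≠ 0` with
an open subset of `g × g_h`; its inverse `(x, c) ↦ (x, T_x⁻¹ c)` is rational by Cramer's rule.

It remains to see that the pairs with `det T_x ≠ 0` are dense, that is, that every component of the
commuting variety dominates `g` under `(x, y) ↦ x`. Splitting off the center reduces this to a
nondegenerate Killing form. Let `(x, y)` be the generic point of a component, with coordinates in an
algebraically closed field `F`, and let `Θ` be the space of its derivatives `(D x, D y)`. The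
functions `tr ((ad x)ʲ ad w)` of `w` give syzygies of the equations `⁅x, y⁆ = 0`, so Krull's height
theorem yields `dim Θ ≥ dim g + dim Q_x`, where `Q_x` is the span of the gradients at `x` of the
traces of powers of `ad`. Conversely, the derivative of a matrix `M` is trace-orthogonal to every
matrix commuting with `M` and orthogonal to all powers of `M`, which confines `D x` to
`[x, g] + Q_x` and forces equality in the estimate of `dim Θ`. The resulting relation
`[x, g] ∩ Q_x = 0` makes `ad x` semisimple. The same estimate for `y`, which gives
`g_y ⊆ [x, g] + Q_x`, then shows that `y ∈ Q_x` and `g_x ⊆ g_y`, so `D x` takes every value and the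
coordinates of `x` are algebraically independent.
-/

/-! ### Derivations and algebraic independence -/

section Derivation

open MvPolynomial

theorem formallyEtale_of_isAlgebraic_of_charZero (S F : Type*) [CommRing S] [IsDomain S]
    [CharZero S] [Field F] [Algebra S F] [FaithfulSMul S F] [Algebra.IsAlgebraic S F] :
    Algebra.FormallyEtale S F := by
  let _ : Algebra (FractionRing S) F := FractionRing.liftAlgebra S F
  have : CharZero (FractionRing S) :=
    charZero_of_injective_algebraMap (IsFractionRing.injective S (FractionRing S))
  have : Algebra.IsAlgebraic (FractionRing S) F :=
    (IsFractionRing.comap_isAlgebraic_iff (A := S)).1 ‹_›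
  have := Algebra.FormallyEtale.of_isSeparable (FractionRing S) F
  have : Algebra.FormallyEtale S (FractionRing S) :=
    Algebra.FormallyEtale.of_isLocalization (nonZeroDivisors S)
  exact Algebra.FormallyEtale.comp S (FractionRing S) F

theorem exists_derivation_extending_of_formallyEtale {R S T : Type*} [CommRing R] [CommRing S]
    [CommRing T] [Algebra R S] [Algebra R T] [Algebra S T] [IsScalarTower R S T]
    [Algebra.FormallyEtale S T] (d : Derivation R S T) :
    ∃ D : Derivation R T T, ∀ s, D (algebraMap S T s) = d s := by
  let φ : Ω[T⁄R] →ₗ[T] T := d.liftKaehlerDifferential.liftBaseChange T ∘ₗ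
    (KaehlerDifferential.tensorKaehlerEquivOfFormallyEtale R S T).symm.toLinearMap
  refine ⟨φ.compDer (KaehlerDifferential.D R T), fun s => ?_⟩
  change d.liftKaehlerDifferential.liftBaseChange T
    ((KaehlerDifferential.tensorKaehlerEquivOfFormallyEtale R S T).symm
      (KaehlerDifferential.D R T _)) = _
  rw [KaehlerDifferential.tensorKaehlerEquivOfFormallyEtale_symm_D_algebraMap,
    LinearMap.liftBaseChange_tmul, one_smul, Derivation.liftKaehlerDifferential_comp_D]

theorem exists_derivation_of_isTranscendenceBasis {K F ι : Type*} [Field K] [CharZero K] [Field F]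
    [Algebra K F] {c : ι → F} (hc : IsTranscendenceBasis K c) (v : ι → F) :
    ∃ D : Derivation K F F, ∀ i, D (c i) = v i := by
  let _ : Algebra (MvPolynomial ι K) F := (aeval c : MvPolynomial ι K →ₐ[K] F).toAlgebra
  have : IsScalarTower K (MvPolynomial ι K) F :=
    IsScalarTower.of_algebraMap_eq' (aeval c : MvPolynomial ι K →ₐ[K] F).comp_algebraMap.symm
  have : FaithfulSMul (MvPolynomial ι K) F := (faithfulSMul_iff_algebraMap_injective _ _).2 hc.1
  have := hc.isAlgebraic
  have : Algebra.IsAlgebraic (MvPolynomial ι K) F :=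
    Algebra.IsAlgebraic.of_ringHom_of_comp_eq hc.1.aevalEquiv (RingHom.id F)
      hc.1.aevalEquiv.surjective Function.injective_id
      (RingHom.ext fun p => hc.1.algebraMap_aevalEquiv p)
  have := formallyEtale_of_isAlgebraic_of_charZero (MvPolynomial ι K) F
  obtain ⟨D, hD⟩ := exists_derivation_extending_of_formallyEtale (mkDerivation K v)
  refine ⟨D, fun i => ?_⟩
  have hX : algebraMap (MvPolynomial ι K) F (X i) = c i := aeval_X c i
  rw [← hX, hD, mkDerivation_X]

theorem exists_derivation_of_algebraicIndependent {K F ι : Type*} [Field K] [CharZero K] [Field F]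
    [Algebra K F] {c : ι → F} (hc : AlgebraicIndependent K c) (v : ι → F) :
    ∃ D : Derivation K F F, ∀ i, D (c i) = v i := by
  obtain ⟨s, hs, hbasis⟩ := exists_isTranscendenceBasis_superset hc.to_subtype_range
  obtain ⟨D, hD⟩ := exists_derivation_of_isTranscendenceBasis hbasis
    fun a : s => Function.extend c v 0 a
  exact ⟨D, fun i => (hD ⟨c i, hs ⟨i, rfl⟩⟩).trans (hc.injective.extend_apply v 0 i)⟩

theorem totalDegree_pderiv_le {σ R : Type*} [CommSemiring R] (i : σ) (p : MvPolynomial σ R) :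
    (pderiv i p).totalDegree ≤ p.totalDegree - 1 := by
  refine Finset.sup_le fun m hm => ?_
  have hm' : m + Finsupp.single i 1 ∈ p.support := by
    rw [mem_support_iff, coeff_pderiv] at hm
    exact mem_support_iff.2 fun h => hm (by rw [h, zero_mul])
  have hdeg := le_totalDegree hm'
  rw [Finsupp.sum_add_index' (fun _ => rfl) fun _ _ _ => rfl, Finsupp.sum_single_index rfl] at hdeg
  exact Nat.le_sub_one_of_lt hdeg

theorem eq_C_constantCoeff_of_pderiv_eq_zero {σ R : Type*} [CommRing R] [IsAddTorsionFree R]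
    {p : MvPolynomial σ R} (h : ∀ i, pderiv i p = 0) : p = C (constantCoeff p) := by
  refine coe_injective σ R (MvPowerSeries.pderiv.ext (fun i => ?_) ?_)
  · rw [MvPowerSeries.pderiv_coe, MvPowerSeries.pderiv_coe, h, pderiv_C]
  · rw [coe_C, MvPowerSeries.constantCoeff_C, ← MvPowerSeries.coeff_zero_eq_constantCoeff_apply,
      coeff_coe, constantCoeff_eq]

theorem derivation_aeval_eq_aeval_pderiv {σ K F : Type*} [DecidableEq σ] [CommRing K] [CommRing F]
    [Algebra K F] {c : σ → F} {i : σ} {D : Derivation K F F}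
    (hD : ∀ j, D (c j) = Pi.single (M := fun _ => F) i 1 j) (p : MvPolynomial σ K) :
    D (aeval c p) = aeval c (pderiv i p) := by
  induction p using MvPolynomial.induction_on with
  | C a => simp
  | add p q hp hq => simp [hp, hq]
  | mul_X p j hp =>
    simp only [map_mul, aeval_X, Derivation.leibniz, hp, hD, smul_eq_mul, map_add, pderiv_X]
    rcases eq_or_ne j i with rfl | hij <;> simp [*]

theorem algebraicIndependent_of_exists_derivation {K F ι : Type*} [Field K] [CharZero K] [Field F]
    [Algebra K F] [DecidableEq ι] {c : ι → F}
    (h : ∀ i, ∃ D : Derivation K F F, ∀ j, D (c j) = Pi.single (M := fun _ => F) i 1 j) :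
    AlgebraicIndependent K c := by
  suffices ∀ n (p : MvPolynomial ι K), p.totalDegree ≤ n → aeval c p = 0 → p = 0 from
    algebraicIndependent_iff.2 fun p hp => this _ p le_rfl hp
  have eq_zero_of_eq_C {p : MvPolynomial ι K} {a : K} (hC : p = C a) (hp : aeval c p = 0) :
      p = 0 := by
    rw [hC, aeval_C, map_eq_zero] at hp
    rw [hC, hp, map_zero]
  intro n
  induction n with
  | zero => exact fun p hdeg => eq_zero_of_eq_C (totalDegree_eq_zero_iff_eq_C.1 (by omega))
  | succ n ih =>
    refine fun p hdeg hp => eq_zero_of_eq_C (eq_C_constantCoeff_of_pderiv_eq_zero fun i => ?_) hp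
    obtain ⟨D, hD⟩ := h i
    refine ih _ ((totalDegree_pderiv_le i p).trans (by omega)) ?_
    rw [← derivation_aeval_eq_aeval_pderiv hD, hp, map_zero]

end Derivation

/-! ### Heights of kernels of evaluation maps -/

section Height

open MvPolynomial

universe w

theorem height_add_one_le_of_liesOver_of_ne_map_C {A : Type*} [CommRing A] [IsNoetherianRing A]
    (q : Ideal A) [q.IsPrime] (P : Ideal (Polynomial A)) [P.IsPrime] [hP : P.LiesOver q]
    (hne : P ≠ q.map Polynomial.C) : q.height + 1 ≤ P.height := by
  have : (q.map Polynomial.C).IsPrime := Ideal.isPrime_map_C_of_isPrime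
  have : (q.map Polynomial.C).LiesOver q := ⟨by
    ext a
    change a ∈ q ↔ Polynomial.C a ∈ q.map Polynomial.C
    refine Ideal.mem_map_C_iff.trans ⟨fun h => by simpa using h 0, fun h n => ?_⟩ |>.symm
    rw [Polynomial.coeff_C]
    split_ifs
    exacts [h, q.zero_mem]⟩
  have hle : q.map Polynomial.C ≤ P := Ideal.map_le_iff_le_comap.2 hP.over.le
  calc q.height + 1 ≤ (q.map Polynomial.C).height + 1 := by
        rw [Ideal.height_eq_height_add_of_liesOver_of_hasGoingDown q (q.map Polynomial.C)]
        gcongr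
        exact le_self_add
    _ ≤ P.height := Ideal.height_add_one_le_of_lt_of_isPrime (hle.lt_of_ne hne.symm)

section

variable {R S σ β : Type*} [CommRing R] [CommRing S] [Algebra R S]

theorem eval₂_optionEquivLeft (c : Option σ → S) (p : MvPolynomial (Option σ) R) :
    (optionEquivLeft R σ p).eval₂ (aeval (c ∘ some) : MvPolynomial σ R →ₐ[R] S).toRingHom (c none) =
      aeval c p := by
  induction p using MvPolynomial.induction_on with
  | C a => simp
  | add p q hp hq => simp only [map_add, Polynomial.eval₂_add, hp, hq]
  | mul_X p i hp =>
    rw [map_mul, Polynomial.eval₂_mul, hp, map_mul]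
    cases i <;> simp

theorem optionEquivLeft_rename (j : β → σ) (p : MvPolynomial (Option β) R) :
    optionEquivLeft R σ (rename (Option.map j) p) =
      (optionEquivLeft R β p).map (rename j : MvPolynomial β R →ₐ[R] _).toRingHom := by
  induction p using MvPolynomial.induction_on with
  | C a => simp
  | add p q hp hq => simp only [map_add, Polynomial.map_add, hp, hq]
  | mul_X p i hp =>
    rw [map_mul, map_mul, map_mul, Polynomial.map_mul, hp]
    cases i <;> simp

theorem height_ker_aeval_option (c : Option σ → S) :
    (RingHom.ker (aeval c : MvPolynomial (Option σ) R →ₐ[R] S)).height =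
      (RingHom.ker (Polynomial.eval₂RingHom
        (aeval (c ∘ some) : MvPolynomial σ R →ₐ[R] S).toRingHom (c none))).height := by
  rw [← RingEquiv.height_comap (optionEquivLeft R σ).toRingEquiv]
  congr 1
  ext p
  simp only [RingHom.mem_ker, Ideal.mem_comap, ← eval₂_optionEquivLeft c p]
  rfl

theorem algebraicIndependent_comp_optionMap {c : Option σ → S} {j : β → σ}
    (hj : AlgebraicIndependent R (c ∘ some ∘ j))
    (hker : RingHom.ker (Polynomial.eval₂RingHom
        (aeval (c ∘ some) : MvPolynomial σ R →ₐ[R] S).toRingHom (c none)) =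
      (RingHom.ker (aeval (c ∘ some) : MvPolynomial σ R →ₐ[R] S)).map Polynomial.C) :
    AlgebraicIndependent R (c ∘ Option.map j) := by
  refine algebraicIndependent_iff.2 fun p hp => (optionEquivLeft R β).injective ?_
  have hmem : optionEquivLeft R σ (rename (Option.map j) p) ∈ RingHom.ker
      (Polynomial.eval₂RingHom (aeval (c ∘ some) : MvPolynomial σ R →ₐ[R] S).toRingHom
        (c none)) := by
    rw [RingHom.mem_ker, Polynomial.coe_eval₂RingHom, eval₂_optionEquivLeft, aeval_rename, hp]
  rw [hker, optionEquivLeft_rename, Ideal.mem_map_C_iff] at hmem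
  rw [map_zero]
  ext1 n
  have hcoeff := hmem n
  rw [Polynomial.coeff_map, RingHom.mem_ker] at hcoeff
  exact algebraicIndependent_iff.1 hj _ ((aeval_rename j (c ∘ some) _).symm.trans hcoeff)

end

theorem exists_algebraicIndependent_card_le_card_add_height {K F : Type*} [Field K] [Field F]
    [Algebra K F] {σ : Type w} [Finite σ] (c : σ → F) :
    ∃ (β : Type w) (_ : Finite β) (j : β → σ), AlgebraicIndependent K (c ∘ j) ∧
      (Nat.card σ : ℕ∞) ≤
        Nat.card β + (RingHom.ker (aeval c : MvPolynomial σ K →ₐ[K] F)).height := by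
  induction σ using Finite.induction_empty_option with
  | of_equiv e ih =>
    obtain ⟨β, hβ, j, hj, hle⟩ := ih (c ∘ e)
    have hker : RingHom.ker (aeval (c ∘ e) : MvPolynomial _ K →ₐ[K] F) =
        (RingHom.ker (aeval c : MvPolynomial _ K →ₐ[K] F)).comap (renameEquiv K e).toRingEquiv := by
      ext p
      simp [RingHom.mem_ker, Ideal.mem_comap, aeval_rename]
    refine ⟨β, hβ, e ∘ j, hj, ?_⟩
    rwa [← Nat.card_congr e, ← RingEquiv.height_comap (renameEquiv K e).toRingEquiv, ← hker]
  | h_empty =>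
    exact ⟨PEmpty, inferInstance, PEmpty.elim,
      algebraicIndependent_empty_type_iff.2 (algebraMap K F).injective, by simp⟩
  | @h_option σ _ ih =>
    obtain ⟨β, hβ, j, hj, hle⟩ := ih (c ∘ some)
    set q := RingHom.ker (aeval (c ∘ some) : MvPolynomial σ K →ₐ[K] F)
    set Ψ := Polynomial.eval₂RingHom
      (aeval (c ∘ some) : MvPolynomial σ K →ₐ[K] F).toRingHom (c none)
    have : q.IsPrime := RingHom.ker_isPrime _
    have : (RingHom.ker Ψ).IsPrime := RingHom.ker_isPrime _
    have : (RingHom.ker Ψ).LiesOver q := ⟨by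
      ext a
      simp [q, Ψ, Ideal.under, RingHom.mem_ker, Ideal.mem_comap]⟩
    rw [height_ker_aeval_option, Finite.card_option, Nat.cast_add, Nat.cast_one]
    by_cases heq : RingHom.ker Ψ = q.map Polynomial.C
    · refine ⟨Option β, inferInstance, Option.map j, algebraicIndependent_comp_optionMap hj heq, ?_⟩
      rw [Finite.card_option, Nat.cast_add, Nat.cast_one, add_right_comm,
        Ideal.height_eq_height_add_of_liesOver_of_hasGoingDown q (RingHom.ker Ψ), ← add_assoc]
      gcongr
      exact hle.trans le_self_add
    · refine ⟨β, hβ, some ∘ j, hj, (add_le_add_left hle 1).trans ?_⟩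
      rw [add_assoc]
      gcongr
      exact height_add_one_le_of_liesOver_of_ne_map_C q _ heq

/-- The space of values `(D (c i))ᵢ` of `K`-derivations `D` of `F` on the family `c`, that is, the
Zariski tangent space at `c` of the `K`-variety with generic point `c`. -/
def derivationValues (K : Type*) {F σ : Type*} [Field K] [Field F] [Algebra K F] (c : σ → F) :
    Submodule F (σ → F) :=
  LinearMap.range (LinearMap.pi fun i =>
    { toFun := fun D : Derivation K F F => D (c i)
      map_add' := fun _ _ => rfl
      map_smul' := fun _ _ => rfl })

theorem mem_derivationValues_iff {K F σ : Type*} [Field K] [Field F] [Algebra K F] {c v : σ → F} :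
    v ∈ derivationValues K c ↔ ∃ D : Derivation K F F, ∀ i, D (c i) = v i := by
  simp only [derivationValues, LinearMap.mem_range, funext_iff]
  rfl

theorem card_le_finrank_derivationValues_add_height {K F σ : Type*} [Field K] [CharZero K] [Field F]
    [Algebra K F] [Finite σ] (c : σ → F) :
    (Nat.card σ : ℕ∞) ≤ Module.finrank F (derivationValues K c) +
      (RingHom.ker (aeval c : MvPolynomial σ K →ₐ[K] F)).height := by
  obtain ⟨β, _, j, hj, hle⟩ := exists_algebraicIndependent_card_le_card_add_height (K := K) c
  have hsurj : Function.Surjective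
      (LinearMap.funLeft F F j ∘ₗ (derivationValues K c).subtype) := fun v => by
    obtain ⟨D, hD⟩ := exists_derivation_of_algebraicIndependent hj v
    exact ⟨⟨fun i => D (c i), mem_derivationValues_iff.2 ⟨D, fun _ => rfl⟩⟩, funext hD⟩
  have hcard := LinearMap.finrank_le_finrank_of_surjective hsurj
  have := Fintype.ofFinite β
  rw [Module.finrank_fintype_fun_eq_card, ← Nat.card_eq_fintype_card] at hcard
  exact hle.trans (by gcongr)

end Height

/-! ### Krull's height theorem for equations with syzygies -/

section Krull

theorem exists_linearIndependent_comp {K V J : Type*} [Field K] [AddCommGroup V] [Module K V]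
    [FiniteDimensional K V] (v : J → V) {m : ℕ}
    (hm : Module.finrank K (Submodule.span K (Set.range v)) = m) :
    ∃ a : Fin m → J, LinearIndependent K (v ∘ a) := by
  subst hm
  obtain ⟨f, hf, -, hli⟩ := Submodule.exists_fun_fin_finrank_span_eq K (Set.range v)
  choose a ha using hf
  exact ⟨a, by rwa [show v ∘ a = f from funext ha]⟩

theorem exists_det_submatrix_ne_zero {K J ι : Type*} [Field K] [Finite ι] (M : Matrix J ι K)
    {m : ℕ} (hm : Module.finrank K (Submodule.span K (Set.range M.row)) = m) :
    ∃ (a : Fin m → J) (b : Fin m → ι), (M.submatrix a b).det ≠ 0 := by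
  have := Fintype.ofFinite ι
  obtain ⟨a, ha⟩ := exists_linearIndependent_comp M.row hm
  have hrank : Module.finrank K (Submodule.span K (Set.range (M.submatrix a id).col)) = m := by
    have hrows : LinearIndependent K (M.submatrix a id).row := ha
    rw [← Matrix.rank_eq_finrank_span_cols, hrows.rank_matrix, Fintype.card_fin]
  obtain ⟨b, hb⟩ := exists_linearIndependent_comp (M.submatrix a id).col hrank
  have hcols : LinearIndependent K (M.submatrix a b).col := hb
  rw [Matrix.linearIndependent_cols_iff_isUnit, Matrix.isUnit_iff_isUnit_det] at hcols
  exact ⟨a, b, hcols.ne_zero⟩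

theorem det_submatrix_mul_mem_span_compl {R ι κ : Type*} [CommRing R] [Fintype ι] [Fintype κ]
    [DecidableEq κ] {f : ι → R} {G : Matrix κ ι R} (hG : G.mulVec f = 0) {b : κ → ι}
    (hb : Function.Injective b) (j : κ) :
    (G.submatrix id b).det * f (b j) ∈ Ideal.span (f '' (Set.range b)ᶜ) := by
  classical
  have hrow (i : κ) : (G.submatrix id b).mulVec (f ∘ b) i ∈ Ideal.span (f '' (Set.range b)ᶜ) := by
    have hsplit := congrFun hG i
    rw [Matrix.mulVec, dotProduct, ← Finset.sum_add_sum_compl (Finset.univ.image b),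
      Finset.sum_image hb.injOn, Pi.zero_apply] at hsplit
    change ∑ j, G i (b j) * f (b j) ∈ _
    rw [eq_neg_of_add_eq_zero_left hsplit]
    refine neg_mem (Ideal.sum_mem _ fun l hl => Ideal.mul_mem_left _ _ (Ideal.subset_span ?_))
    exact ⟨l, by simpa using hl, rfl⟩
  have hadj : (G.submatrix id b).adjugate.mulVec ((G.submatrix id b).mulVec (f ∘ b)) j =
      (G.submatrix id b).det * f (b j) := by
    rw [Matrix.mulVec_mulVec, Matrix.adjugate_mul, Matrix.smul_mulVec, Matrix.one_mulVec]
    rfl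
  rw [← hadj]
  exact Ideal.sum_mem _ fun i _ => Ideal.mul_mem_left _ _ (hrow i)

theorem mem_minimalPrimes_span_compl {R ι κ : Type*} [CommRing R] [Fintype ι] [Fintype κ]
    [DecidableEq κ] {f : ι → R} {p : Ideal R} (hp : p ∈ (Ideal.span (Set.range f)).minimalPrimes)
    {G : Matrix κ ι R} (hG : G.mulVec f = 0) {b : κ → ι} (hb : Function.Injective b)
    (hdet : (G.submatrix id b).det ∉ p) :
    p ∈ (Ideal.span (f '' (Set.range b)ᶜ)).minimalPrimes := by
  refine ⟨⟨hp.1.1, (Ideal.span_mono (Set.image_subset_range _ _)).trans hp.1.2⟩,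
    fun q ⟨hq, hle⟩ hqp => hp.2 ⟨hq, Ideal.span_le.2 ?_⟩ hqp⟩
  rintro _ ⟨l, rfl⟩
  by_cases hl : l ∈ Set.range b
  · obtain ⟨j, rfl⟩ := hl
    have hmem := hle (det_submatrix_mul_mem_span_compl hG hb j)
    exact (hq.mem_or_mem hmem).resolve_left fun h => hdet (hqp h)
  · exact hle (Ideal.subset_span ⟨l, hl, rfl⟩)

theorem height_add_finrank_span_syzygies_le {R F ι J : Type*} [CommRing R] [IsNoetherianRing R]
    [Field F] [Fintype ι] {f : ι → R} (θ : R →+* F)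
    (hθ : RingHom.ker θ ∈ (Ideal.span (Set.range f)).minimalPrimes) {G : Matrix J ι R}
    (hG : G.mulVec f = 0) :
    (RingHom.ker θ).height + Module.finrank F (Submodule.span F (Set.range (G.map θ).row)) ≤
      Fintype.card ι := by
  classical
  obtain ⟨m, hm⟩ : ∃ m, Module.finrank F (Submodule.span F (Set.range (G.map θ).row)) = m :=
    ⟨_, rfl⟩
  obtain ⟨a, b, hab⟩ := exists_det_submatrix_ne_zero (G.map θ) hm
  have hdet : (G.submatrix a b).det ∉ RingHom.ker θ := by
    rwa [RingHom.mem_ker, RingHom.map_det]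
  have hb : Function.Injective b := fun i j hij => by
    by_contra hne
    exact hab (Matrix.det_zero_of_column_eq hne fun r => by simp [hij])
  set T : Finset ι := (Finset.univ.image b)ᶜ
  have hT : T.card + m = Fintype.card ι := by
    rw [← Finset.card_compl_add_card (Finset.univ.image b), Finset.card_image_of_injective _ hb,
      Finset.card_univ, Fintype.card_fin]
  have hspan : f '' (Set.range b)ᶜ = (T.image f : Finset R) := by simp [T]
  have hmin : RingHom.ker θ ∈ (Ideal.span (T.image f : Set R)).minimalPrimes := by
    rw [← hspan]
    exact mem_minimalPrimes_span_compl hθ (G := G.submatrix a id)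
      (funext fun i => congrFun hG (a i)) hb hdet
  have hheight : (RingHom.ker θ).height ≤ T.card :=
    (Ideal.height_le_card_of_mem_minimalPrimes_span_finset hmin).trans
      (by exact_mod_cast Finset.card_image_le)
  rw [hm, ← hT, Nat.cast_add]
  gcongr

end Krull

/-! ### Traces of derivatives of matrices -/

section Triangularization

open Module

variable {F V : Type*} [Field F] [AddCommGroup V] [Module F V]

theorem exists_common_eigenvector [IsAlgClosed F] [FiniteDimensional F V] [Nontrivial V]
    {A B : End F V} (h : Commute A B) : ∃ v ≠ 0, ∃ a b : F, A v = a • v ∧ B v = b • v := by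
  obtain ⟨a, ha⟩ := End.exists_eigenvalue A
  have hmaps := End.mapsTo_genEigenspace_of_comm h a 1
  have := (Submodule.nontrivial_iff_ne_bot).2 ha
  obtain ⟨b, hb⟩ := End.exists_eigenvalue (B.restrict hmaps)
  obtain ⟨⟨v, hv⟩, hvB, hv0⟩ := hb.exists_hasEigenvector
  exact ⟨v, fun h0 => hv0 (Subtype.ext h0), a, b, End.mem_eigenspace_iff.1 hv,
    congrArg Subtype.val (End.mem_eigenspace_iff.1 hvB)⟩

theorem mem_span_image_Iic_mkFinSnoc {n : ℕ} {N : Submodule F V} {b : Basis (Fin n) F N} {y : V}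
    {hli : ∀ c : F, ∀ x ∈ N, c • y + x = 0 → c = 0} {hsp : ∀ z : V, ∃ c : F, z + c • y ∈ N}
    {A : End F V} {hA : ∀ v ∈ N, A v ∈ N}
    (h : ∀ j, A.restrict hA (b j) ∈ Submodule.span F (b '' Set.Iic j)) (j : Fin (n + 1)) :
    A (Basis.mkFinSnoc b y hli hsp j) ∈
      Submodule.span F (Basis.mkFinSnoc b y hli hsp '' Set.Iic j) := by
  cases j using Fin.lastCases with
  | last =>
    rw [← Fin.top_eq_last, Set.Iic_top, Set.image_univ, Basis.span_eq]
    exact Submodule.mem_top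
  | cast j =>
    have hj := Submodule.mem_map_of_mem (f := N.subtype) (h j)
    rw [Submodule.map_span] at hj
    simp only [Submodule.subtype_apply, LinearMap.coe_restrict_apply] at hj
    rw [Basis.coe_mkFinSnoc, Fin.snoc_castSucc]
    refine Submodule.span_mono ?_ hj
    rintro _ ⟨_, ⟨i, hi, rfl⟩, rfl⟩
    exact ⟨i.castSucc, Fin.castSucc_le_castSucc_iff.2 hi, Fin.snoc_castSucc ..⟩

theorem exists_basis_forall_mem_span_image_Iic [IsAlgClosed F] [FiniteDimensional F V] {n : ℕ}
    (hn : finrank F V = n) {A B : End F V} (h : Commute A B) :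
    ∃ b : Basis (Fin n) F V, ∀ j, A (b j) ∈ Submodule.span F (b '' Set.Iic j) ∧
      B (b j) ∈ Submodule.span F (b '' Set.Iic j) := by
  induction n generalizing V with
  | zero => exact ⟨finBasisOfFinrankEq F V hn, fun j => j.elim0⟩
  | succ n ih =>
    have : Nontrivial V := nontrivial_of_finrank_pos (R := F) (by omega)
    have hdual : Commute (LinearMap.dualMap A) (LinearMap.dualMap B) :=
      congrArg LinearMap.dualMap h.symm.eq
    obtain ⟨l, hl, α, β, hA, hB⟩ := exists_common_eigenvector hdual
    have hAker : ∀ v ∈ LinearMap.ker l, A v ∈ LinearMap.ker l := fun v hv =>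
      (LinearMap.congr_fun hA v).trans (by rw [LinearMap.smul_apply, hv, smul_zero])
    have hBker : ∀ v ∈ LinearMap.ker l, B v ∈ LinearMap.ker l := fun v hv =>
      (LinearMap.congr_fun hB v).trans (by rw [LinearMap.smul_apply, hv, smul_zero])
    have hker : finrank F (LinearMap.ker l) = n := by
      have := Dual.finrank_ker_add_one_of_ne_zero hl
      omega
    obtain ⟨b, hb⟩ := ih hker (LinearMap.restrict_commute h hAker hBker)
    obtain ⟨y, hy⟩ : ∃ y, l y = 1 := LinearMap.surjective hl 1
    refine ⟨Basis.mkFinSnoc b y (fun c x hx hc => ?_) (fun z => ⟨-l z, by simp [hy]⟩), fun j =>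
      ⟨mem_span_image_Iic_mkFinSnoc (fun j => (hb j).1) j,
        mem_span_image_Iic_mkFinSnoc (fun j => (hb j).2) j⟩⟩
    simpa [hy, LinearMap.mem_ker.1 hx] using congrArg l hc

theorem blockTriangular_toMatrix {ι : Type*} [Fintype ι] [LinearOrder ι] {b : Basis ι F V}
    {A : End F V} (h : ∀ j, A (b j) ∈ Submodule.span F (b '' Set.Iic j)) :
    (LinearMap.toMatrix b b A).BlockTriangular id := fun i j hij => by
  have hsupp := (b.mem_span_image).1 (h j)
  rw [LinearMap.toMatrix_apply]
  by_contra hne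
  exact hij.not_ge (hsupp (Finsupp.mem_support_iff.2 hne))

theorem exists_upperTriangular_conj [IsAlgClosed F] {ι : Type*} [Fintype ι] {M N : Matrix ι ι F}
    (h : Commute M N) :
    ∃ (n : ℕ) (T : Matrix ι (Fin n) F) (S : Matrix (Fin n) ι F) (M' N' : Matrix (Fin n) (Fin n) F),
      S * T = 1 ∧ M'.BlockTriangular id ∧ N'.BlockTriangular id ∧ Commute M' N' ∧
        M = T * M' * S ∧ N = T * N' * S := by
  classical
  have hcomm : Commute (Matrix.toLin' M) (Matrix.toLin' N) := h.map Matrix.toLinAlgEquiv'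
  obtain ⟨b, hb⟩ := exists_basis_forall_mem_span_image_Iic rfl hcomm
  let c := Pi.basisFun F ι
  refine ⟨_, c.toMatrix b, b.toMatrix c, LinearMap.toMatrix b b (Matrix.toLin' M),
    LinearMap.toMatrix b b (Matrix.toLin' N), Basis.toMatrix_mul_toMatrix_flip b c,
    blockTriangular_toMatrix fun j => (hb j).1, blockTriangular_toMatrix fun j => (hb j).2,
    hcomm.map (LinearMap.toMatrixAlgEquiv b), ?_, ?_⟩ <;>
  rw [basis_toMatrix_mul_linearMap_toMatrix_mul_basis_toMatrix] <;>
  exact (LinearMap.toMatrix'_toLin' _).symm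

end Triangularization

section TraceDerivation

open Matrix

theorem map_derivation_mul {R F l m n : Type*} [CommRing R] [CommRing F] [Algebra R F] [Fintype m]
    (D : Derivation R F F) (M : Matrix l m F) (N : Matrix m n F) :
    (M * N).map D = M.map D * N + M * N.map D := by
  ext i j
  simp only [map_apply, mul_apply, Matrix.add_apply, map_sum, Derivation.leibniz, smul_eq_mul,
    ← Finset.sum_add_distrib]
  exact Finset.sum_congr rfl fun _ _ => by ring

theorem trace_map_derivation_conj_mul_conj {R F m n : Type*} [CommRing R] [CommRing F] [Algebra R F]
    [Fintype m] [Fintype n] [DecidableEq n] (D : Derivation R F F) {T : Matrix m n F}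
    {S : Matrix n m F} (hST : S * T = 1) {M N : Matrix n n F} (h : Commute M N) :
    ((T * M * S).map D * (T * N * S)).trace = (M.map D * N).trace := by
  have hD : S.map D * T = -(S * T.map D) := by
    rw [eq_neg_iff_add_eq_zero, ← map_derivation_mul, hST]
    ext i j
    rcases eq_or_ne i j with rfl | hij <;> simp [*]
  have hleft : (T.map D * M * S * (T * N * S)).trace = (S * T.map D * (M * N)).trace := by
    rw [show T.map D * M * S * (T * N * S) = T.map D * M * (S * T) * N * S by
      simp only [Matrix.mul_assoc], hST, Matrix.mul_one, trace_mul_comm]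
    simp only [Matrix.mul_assoc]
  have hmid : (T * M.map D * S * (T * N * S)).trace = (M.map D * N).trace := by
    rw [show T * M.map D * S * (T * N * S) = T * (M.map D * (S * T) * N * S) by
      simp only [Matrix.mul_assoc], hST, Matrix.mul_one, trace_mul_comm, Matrix.mul_assoc, hST,
      Matrix.mul_one]
  have hright : (T * M * S.map D * (T * N * S)).trace = -(S * T.map D * (M * N)).trace := by
    rw [show T * M * S.map D * (T * N * S) = T * (M * (S.map D * T) * N * S) by
      simp only [Matrix.mul_assoc], hD, trace_mul_comm,
      show M * -(S * T.map D) * N * S * T = M * (-(S * T.map D) * N * (S * T)) by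
      simp only [Matrix.mul_assoc], hST, trace_mul_comm, Matrix.mul_one, Matrix.mul_assoc, ← h.eq,
      Matrix.neg_mul, trace_neg]
  rw [map_derivation_mul, map_derivation_mul, Matrix.add_mul, Matrix.add_mul, Matrix.add_mul,
    trace_add, trace_add, hleft, hmid, hright, add_comm, neg_add_cancel_left]

section UpperTriangular

variable {F n : Type*} [CommRing F] [Fintype n] [LinearOrder n] {M N : Matrix n n F}

theorem mul_apply_self_of_upperTriangular (hM : M.BlockTriangular id) (hN : N.BlockTriangular id)
    (i : n) : (M * N) i i = M i i * N i i := by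
  rw [mul_apply]
  refine Finset.sum_eq_single i (fun j _ hji => ?_) (by simp)
  rcases lt_or_gt_of_ne hji with hlt | hgt
  · rw [hM hlt, zero_mul]
  · rw [hN hgt, mul_zero]

theorem pow_apply_self_of_upperTriangular (hM : M.BlockTriangular id) (d : ℕ) (i : n) :
    (M ^ d) i i = M i i ^ d := by
  induction d with
  | zero => simp
  | succ d ih => rw [pow_succ, pow_succ, mul_apply_self_of_upperTriangular (hM.pow d) hM, ih]

theorem trace_mul_of_upperTriangular (hM : M.BlockTriangular id) (hN : N.BlockTriangular id) :
    (M * N).trace = ∑ i, M i i * N i i :=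
  Finset.sum_congr rfl fun i _ => mul_apply_self_of_upperTriangular hM hN i

end UpperTriangular

theorem sum_apply_mul_eq_zero_of_sum_pow_mul_eq_zero {F ι : Type*} [Field F] [Fintype ι]
    {a z : ι → F} (h : ∀ d : ℕ, ∑ i, a i ^ d * z i = 0) (f : F → F) : ∑ i, f (a i) * z i = 0 := by
  classical
  have hpoly (p : Polynomial F) : ∑ i, p.eval (a i) * z i = 0 := by
    simp only [Polynomial.eval_eq_sum_range, Finset.sum_mul]
    rw [Finset.sum_comm]
    refine Finset.sum_eq_zero fun d _ => ?_
    simp only [mul_assoc, ← Finset.mul_sum, h, mul_zero]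
  rw [← hpoly (Lagrange.interpolate (Finset.univ.image a) id f)]
  refine Finset.sum_congr rfl fun i _ => ?_
  exact congrArg (· * z i) (Lagrange.eval_interpolate_at_node f (v := id) (Set.injOn_id _)
    (Finset.mem_image_of_mem a (Finset.mem_univ i))).symm

theorem trace_map_derivation_mul_eq_zero {R F ι : Type*} [CommRing R] [Field F] [IsAlgClosed F]
    [Algebra R F] [Fintype ι] [DecidableEq ι] (D : Derivation R F F) {M N : Matrix ι ι F}
    (hMN : Commute M N) (htrace : ∀ d : ℕ, (M ^ d * N).trace = 0) : (M.map D * N).trace = 0 := by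
  obtain ⟨n, T, S, M', N', hST, hM', hN', hcomm, rfl, rfl⟩ := exists_upperTriangular_conj hMN
  have hconj (d : ℕ) : ((T * M' * S) ^ d * (T * N' * S)) = T * (M' ^ d * N') * S := by
    induction d with
    | zero => simp
    | succ d ih =>
      rw [pow_succ', Matrix.mul_assoc, ih, pow_succ',
        show T * M' * S * (T * (M' ^ d * N') * S) = T * M' * (S * T) * (M' ^ d * N') * S by
        simp only [Matrix.mul_assoc], hST]
      simp only [Matrix.mul_assoc, Matrix.one_mul]
  have hsum (d : ℕ) : ∑ i, M' i i ^ d * N' i i = 0 := by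
    rw [← htrace d, hconj, Matrix.mul_assoc, trace_mul_comm, Matrix.mul_assoc, hST, Matrix.mul_one,
      trace_mul_of_upperTriangular (hM'.pow d) hN']
    simp only [pow_apply_self_of_upperTriangular hM']
  have hDM' : (M'.map D).BlockTriangular id := fun i j hij => by
    rw [map_apply, hM' hij, map_zero]
  rw [trace_map_derivation_conj_mul_conj D hST hcomm, trace_mul_of_upperTriangular hDM' hN']
  exact sum_apply_mul_eq_zero_of_sum_pow_mul_eq_zero hsum D

end TraceDerivation

/-! ### Deformations of a commuting pair in a Killing Lie algebra -/

section Killing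

open Module LieAlgebra LinearMap.BilinForm

lemma finrank_map_fst_add_finrank_comap_inr {F V W : Type*} [Field F] [AddCommGroup V] [Module F V]
    [AddCommGroup W] [Module F W] [FiniteDimensional F V] [FiniteDimensional F W]
    (Θ : Submodule F (V × W)) :
    finrank F (Θ.map (LinearMap.fst F V W)) + finrank F (Θ.comap (LinearMap.inr F V W)) =
      finrank F Θ := by
  have hker : (LinearMap.ker ((LinearMap.fst F V W).domRestrict Θ)).map Θ.subtype =
      (Θ.comap (LinearMap.inr F V W)).map (LinearMap.inr F V W) := by
    rw [LinearMap.ker_domRestrict, Submodule.map_comap_subtype, Submodule.map_comap_eq,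
      LinearMap.ker_fst, inf_comm]
  rw [← LinearMap.finrank_range_add_finrank_ker ((LinearMap.fst F V W).domRestrict Θ),
    LinearMap.range_domRestrict, ← Submodule.finrank_map_subtype_eq Θ, hker,
    ((Θ.comap (LinearMap.inr F V W)).equivMapOfInjective (LinearMap.inr F V W)
      LinearMap.inr_injective).finrank_eq]

section CommRing

variable {R L : Type*} [CommRing R] [LieRing L] [LieAlgebra R L]

lemma ad_lie_eq_mul_sub_mul (x y : L) :
    ad R L ⁅x, y⁆ = ad R L x * ad R L y - ad R L y * ad R L x := by
  ext
  simp

lemma commute_ad_of_lie_eq_zero {x y : L} (h : ⁅x, y⁆ = 0) : Commute (ad R L x) (ad R L y) := by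
  rw [commute_iff_eq, ← sub_eq_zero, ← ad_lie_eq_mul_sub_mul, h, map_zero]

/-- The functional `w ↦ tr ((ad x)ʲ ad w)`; up to the factor `j + 1` it is the differential at `x`
of the invariant polynomial `tr ((ad x)ʲ⁺¹)`. -/
def adPowTrace (R : Type*) {L : Type*} [CommRing R] [LieRing L] [LieAlgebra R L] (x : L) (j : ℕ) :
    Dual R L :=
  LinearMap.trace R L ∘ₗ LinearMap.mulLeft R (ad R L x ^ j) ∘ₗ
    (ad R L : L →ₗ[R] Module.End R L)

lemma adPowTrace_apply (x w : L) (j : ℕ) :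
    adPowTrace R x j w = LinearMap.trace R L (ad R L x ^ j * ad R L w) := rfl

lemma adPowTrace_lie_eq_zero {x z : L} (hz : ⁅x, z⁆ = 0) (w : L) (j : ℕ) :
    adPowTrace R x j ⁅z, w⁆ = 0 := by
  have hcomm : Commute (ad R L x ^ j) (ad R L z) := (commute_ad_of_lie_eq_zero hz).pow_left j
  rw [adPowTrace_apply, ad_lie_eq_mul_sub_mul, mul_sub, map_sub, ← mul_assoc,
    hcomm.eq, mul_assoc, LinearMap.trace_mul_comm, mul_assoc, sub_self]

/-- The span of the gradients at `x`, with respect to the Killing form, of the invariant polynomials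
`tr ((ad x)ʲ)`. -/
def traceGradients (R : Type*) {L : Type*} [CommRing R] [LieRing L] [LieAlgebra R L] (x : L) :
    Submodule R L :=
  (Submodule.span R (Set.range (adPowTrace R x))).comap (killingForm R L)

lemma mem_traceGradients_of_ad_mem_adjoin {x n : L}
    (h : ad R L n ∈ Algebra.adjoin R {ad R L x}) : n ∈ traceGradients R x := by
  let traceMul : Module.End R L →ₗ[R] Dual R L :=
    LinearMap.lcomp R R (ad R L : L →ₗ[R] Module.End R L) ∘ₗ
      (LinearMap.mul R (Module.End R L)).compr₂ (LinearMap.trace R L)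
  rw [← Subalgebra.mem_toSubmodule, Algebra.adjoin_eq_span] at h
  have hspan : Submodule.map traceMul (Submodule.span R (Submonoid.closure {ad R L x})) ≤
      Submodule.span R (Set.range (adPowTrace R x)) := by
    rw [Submodule.map_span, Submodule.span_le, Set.image_subset_iff]
    intro A hA
    obtain ⟨j, rfl⟩ := Submonoid.mem_closure_singleton.1 hA
    exact Submodule.subset_span ⟨j, rfl⟩
  exact hspan (Submodule.mem_map_of_mem h)

end CommRing

variable {F L : Type*} [Field F] [LieRing L] [LieAlgebra F L]

local notation "κ" => killingForm F L

lemma mem_cent_iff {x y : L} : y ∈ cent F x ↔ ⁅x, y⁆ = 0 := Iff.rfl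

lemma isCompl_range_ad_cent_of_isSemisimple [FiniteDimensional F L] {x : L}
    (hss : (ad F L x).IsSemisimple) : IsCompl (LinearMap.range (ad F L x)) (cent F x) := by
  have hdisj : Disjoint (LinearMap.range (ad F L x)) (cent F x) := by
    rw [Submodule.disjoint_def]
    rintro _ ⟨a, rfl⟩ ha
    have hgen : a ∈ (ad F L x).maxGenEigenspace 0 :=
      (End.mem_maxGenEigenspace _ _ _).2 ⟨2, by simpa [pow_two, mem_cent_iff] using ha⟩
    rw [hss.isFinitelySemisimple.maxGenEigenspace_eq_eigenspace, End.mem_eigenspace_iff] at hgen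
    rwa [zero_smul] at hgen
  exact ⟨hdisj, codisjoint_iff.2 (Submodule.eq_top_of_disjoint _ _
    (LinearMap.finrank_range_add_finrank_ker (ad F L x)).ge hdisj)⟩

-- `S` acts as `μ` on the generalized `μ`-eigenspace of `ad x`, and the bracket adds eigenvalues.
lemma semisimplePart_ad_lie [FiniteDimensional F L] [IsAlgClosed F] {x : L} {N S : Module.End F L}
    (hN : IsNilpotent N) (hS : S.IsSemisimple) (hNS : Commute N S) (h : ad F L x = N + S)
    (a b : L) : S ⁅a, b⁆ = ⁅S a, b⁆ + ⁅a, S b⁆ := by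
  have apply_eq_smul {μ : F} {v : L} (hv : v ∈ (ad F L x).maxGenEigenspace μ) : S v = μ • v :=
    End.apply_eq_of_mem_of_comm_of_isFinitelySemisimple_of_isNil hv
      (h ▸ hNS.add_left (Commute.refl S)) hS.isFinitelySemisimple (by rwa [h, add_sub_cancel_right])
  have mem_iSup (v : L) : v ∈ ⨆ μ, (ad F L x).maxGenEigenspace μ :=
    End.iSup_maxGenEigenspace_eq_top (ad F L x) ▸ Submodule.mem_top
  induction mem_iSup a using Submodule.iSup_induction' with
  | zero => simp
  | add a a' _ _ iha iha' => simp only [add_lie, map_add, iha, iha']; abel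
  | mem μ a ha =>
    induction mem_iSup b using Submodule.iSup_induction' with
    | zero => simp
    | add b b' _ _ ihb ihb' => simp only [lie_add, map_add, ihb, ihb']; abel
    | mem ν b hb =>
      have hab := LieModule.lie_mem_maxGenEigenspace_toEnd (R := F) (L := L) (M := L) ha hb
      rw [apply_eq_smul hab, apply_eq_smul ha, apply_eq_smul hb, smul_lie, lie_smul, add_smul]

section

variable [IsKilling F L]

lemma lie_eq_zero_of_mem_traceGradients {x u z : L} (hu : u ∈ traceGradients F x)
    (hz : ⁅x, z⁆ = 0) : ⁅u, z⁆ = 0 := by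
  refine (IsKilling.killingForm_nondegenerate F L).1 _ fun w => ?_
  rw [LieModule.traceForm_apply_lie_apply]
  have hspan : Submodule.span F (Set.range (adPowTrace F x)) ≤
      LinearMap.ker (LinearMap.applyₗ ⁅z, w⁆) :=
    Submodule.span_le.2 (Set.range_subset_iff.2 (adPowTrace_lie_eq_zero hz w))
  exact hspan hu

lemma orthogonal_range_ad (x : L) : orthogonal κ (LinearMap.range (ad F L x)) = cent F x := by
  ext z
  have hinv (w : L) : κ ⁅x, w⁆ z = -κ w ⁅x, z⁆ := LieModule.traceForm_apply_lie_apply' F L L x w z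
  simp only [mem_orthogonal_iff, LinearMap.mem_range, forall_exists_index,
    forall_apply_eq_imp_iff, ad_apply, hinv, neg_eq_zero, mem_cent_iff]
  exact ⟨(IsKilling.killingForm_nondegenerate F L).2 _, fun h w => by rw [h, map_zero]⟩

variable [FiniteDimensional F L]

lemma finrank_traceGradients (x : L) :
    finrank F (traceGradients F x) =
      finrank F (Submodule.span F (Set.range (adPowTrace F x))) :=
  ((toDual κ (IsKilling.killingForm_nondegenerate F L)).ofSubmodule' _).finrank_eq

lemma orthogonal_cent (x : L) : orthogonal κ (cent F x) = LinearMap.range (ad F L x) := by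
  rw [← orthogonal_range_ad, orthogonal_orthogonal (IsKilling.killingForm_nondegenerate F L)
    (LieModule.traceForm_isSymm F L L).isRefl]

lemma adPowTrace_eq_zero_of_mem_orthogonal {x z : L} (hz : z ∈ orthogonal κ (traceGradients F x))
    (j : ℕ) : adPowTrace F x j z = 0 := by
  obtain ⟨u, hu⟩ : ∃ u, κ u = adPowTrace F x j :=
    (toDual κ (IsKilling.killingForm_nondegenerate F L)).surjective _
  rw [← hu]
  exact hz u (Submodule.mem_comap.2 (hu ▸ Submodule.subset_span ⟨j, rfl⟩))

lemma mem_range_ad_sup_traceGradients {x u : L}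
    (hu : ∀ z ∈ cent F x, (∀ j, adPowTrace F x j z = 0) → κ u z = 0) :
    u ∈ LinearMap.range (ad F L x) ⊔ traceGradients F x := by
  have hrefl : IsRefl κ := (LieModule.traceForm_isSymm F L L).isRefl
  rw [← orthogonal_orthogonal (IsKilling.killingForm_nondegenerate F L) hrefl
    (LinearMap.range (ad F L x) ⊔ traceGradients F x)]
  intro z hz
  refine hrefl _ _ (hu z ?_ (adPowTrace_eq_zero_of_mem_orthogonal ?_))
  · exact orthogonal_range_ad (F := F) x ▸ orthogonal_le le_sup_left hz
  · exact orthogonal_le le_sup_right hz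

lemma exists_isNilpotent_ad_isSemisimple_ad_sub [IsAlgClosed F] (x : L) :
    ∃ n : L, ad F L n ∈ Algebra.adjoin F {ad F L x} ∧ IsNilpotent (ad F L n) ∧
      (ad F L (x - n)).IsSemisimple := by
  obtain ⟨N, hN, S, -, hnil, hss, hadd⟩ := (ad F L x).exists_isNilpotent_isSemisimple
  have hS : S = ad F L x - N := by rw [hadd, add_sub_cancel_left]
  have hNx : Commute N (ad F L x) :=
    (Algebra.commute_of_mem_adjoin_singleton_of_commute hN (Commute.refl _)).symm
  have hNS : Commute N S := hS ▸ hNx.sub_right (Commute.refl N)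
  have hNad : N = ad F L x - S := by rw [hadd, add_sub_cancel_right]
  let D : LieDerivation F L L := ⟨N, fun a b => by
    simp only [hNad, LinearMap.sub_apply, semisimplePart_ad_lie hnil hss hNS hadd a b, ad_apply,
      lie_sub, leibniz_lie x a b, ← lie_skew b, sub_lie]
    abel⟩
  obtain ⟨n, hn⟩ := LieDerivation.IsKilling.exists_eq_ad D
  have hadn : ad F L n = N :=
    LinearMap.ext fun a => (LieDerivation.ad_apply_apply ..).symm.trans (DFunLike.congr_fun hn a)
  exact ⟨n, hadn ▸ hN, hadn ▸ hnil, by rwa [map_sub, hadn, ← hS]⟩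

lemma isSemisimple_ad_of_disjoint_traceGradients [IsAlgClosed F] {x : L}
    (h : Disjoint (LinearMap.range (ad F L x)) (traceGradients F x)) :
    (ad F L x).IsSemisimple := by
  obtain ⟨n, hadjoin, hnil, hss⟩ := exists_isNilpotent_ad_isSemisimple_ad_sub (F := F) x
  have hrange : n ∈ LinearMap.range (ad F L x) := by
    rw [← orthogonal_cent]
    intro z hz
    have hcomm : Commute (ad F L z) (ad F L n) :=
      Algebra.commute_of_mem_adjoin_singleton_of_commute hadjoin
        (commute_ad_of_lie_eq_zero hz).symm
    exact (LinearMap.isNilpotent_trace_of_isNilpotent (hcomm.isNilpotent_mul_left hnil)).eq_zero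
  have hn : n = 0 :=
    Submodule.disjoint_def.1 h n hrange (mem_traceGradients_of_ad_mem_adjoin hadjoin)
  rwa [hn, sub_zero] at hss

end

/-- A space `Θ` of first-order deformations `(u, v)` of a commuting pair `(x, y)` whose components
`u` are confined to `[x, L] + Q`, where `Q` is spanned by the trace gradients at `x`, and which is
as large as this confinement allows. The derivatives of the generic point of a component of the
commuting variety form such a space. -/
structure IsDeformationSpace (x y : L) (Θ : Submodule F (L × L)) : Prop where
  lie_add_lie {p : L × L} : p ∈ Θ → ⁅p.1, y⁆ + ⁅x, p.2⁆ = 0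
  fst_mem {p : L × L} : p ∈ Θ → p.1 ∈ LinearMap.range (ad F L x) ⊔ traceGradients F x
  finrank_le : finrank F L + finrank F (traceGradients F x) ≤ finrank F Θ

namespace IsDeformationSpace

variable [FiniteDimensional F L] {x y : L} {Θ : Submodule F (L × L)}

-- `dim Θ` is at most `dim ([x, L] + Q) + dim cent x`, so all inequalities are equalities.
lemma disjoint_and_map_fst_eq_and_comap_inr_eq (h : IsDeformationSpace x y Θ) :
    Disjoint (LinearMap.range (ad F L x)) (traceGradients F x) ∧
    Θ.map (LinearMap.fst F L L) = LinearMap.range (ad F L x) ⊔ traceGradients F x ∧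
    Θ.comap (LinearMap.inr F L L) = cent F x := by
  have hΘ := finrank_map_fst_add_finrank_comap_inr Θ
  have hsup := Submodule.finrank_sup_add_finrank_inf_eq (LinearMap.range (ad F L x))
    (traceGradients F x)
  have hrank : finrank F (LinearMap.range (ad F L x)) + finrank F (cent F x) = finrank F L :=
    LinearMap.finrank_range_add_finrank_ker (ad F L x)
  have hmap_le : Θ.map (LinearMap.fst F L L) ≤
      LinearMap.range (ad F L x) ⊔ traceGradients F x :=
    Submodule.map_le_iff_le_comap.2 fun p hp => h.fst_mem hp
  have hcomap_le : Θ.comap (LinearMap.inr F L L) ≤ cent F x := fun v hv => by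
    simpa [mem_cent_iff] using h.lie_add_lie hv
  have hmap := Submodule.finrank_mono hmap_le
  have hcomap := Submodule.finrank_mono hcomap_le
  have hle := h.finrank_le
  refine ⟨disjoint_iff.2 (Submodule.finrank_eq_zero.1 ?_),
    Submodule.eq_of_le_of_finrank_le hmap_le ?_,
    Submodule.eq_of_le_of_finrank_le hcomap_le ?_⟩ <;> omega

lemma exists_mem [IsKilling F L] [IsAlgClosed F] (hxy : ⁅x, y⁆ = 0) (h : IsDeformationSpace x y Θ)
    (h' : IsDeformationSpace y x (Θ.map (LinearEquiv.prodComm F L L : L × L →ₗ[F] L × L)))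
    (u : L) : ∃ v, (u, v) ∈ Θ := by
  obtain ⟨hdisj, hmap, -⟩ := h.disjoint_and_map_fst_eq_and_comap_inr_eq
  obtain ⟨-, -, hcomap⟩ := h'.disjoint_and_map_fst_eq_and_comap_inr_eq
  have hcompl := isCompl_range_ad_cent_of_isSemisimple
    (isSemisimple_ad_of_disjoint_traceGradients hdisj)
  have cent_le : cent F y ≤ LinearMap.range (ad F L x) ⊔ traceGradients F x := fun z hz => by
    obtain ⟨p, hp, hpz⟩ := hcomap.ge hz
    have : p.1 = z := congrArg Prod.snd hpz
    exact this ▸ h.fst_mem hp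
  have hy : y ∈ traceGradients F x := by
    obtain ⟨_, ⟨a, rfl⟩, q, hq, hy⟩ := Submodule.mem_sup.1 (cent_le (lie_self y))
    have hxq : ⁅x, q⁆ = 0 := by
      rw [← lie_skew, lie_eq_zero_of_mem_traceGradients hq (lie_self x), neg_zero]
    have hxa : ad F L x a ∈ cent F x := by simpa [mem_cent_iff, ← hy, hxq] using hxy
    rw [Submodule.disjoint_def.1 hcompl.disjoint _ ⟨a, rfl⟩ hxa, zero_add] at hy
    exact hy ▸ hq
  have hcent : cent F x ≤ cent F y := fun z hz => lie_eq_zero_of_mem_traceGradients hy hz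
  have hu : u ∈ Θ.map (LinearMap.fst F L L) := by
    rw [hmap]
    exact sup_le le_sup_left (hcent.trans cent_le) (hcompl.sup_eq_top.ge Submodule.mem_top)
  obtain ⟨p, hp, rfl⟩ := hu
  exact ⟨p.2, hp⟩

end IsDeformationSpace

end Killing

/-! ### The generic point of a component of the commuting variety -/

section GenericPoint

open Module LieAlgebra MvPolynomial
open scoped TensorProduct

section Coordinates

variable {K L ι : Type*} [CommRing K] [LieRing L] [LieAlgebra K L] [Fintype ι] (b : Basis ι K L)

/-- The identification of a family of coordinates in `A` with respect to `b` with an element of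
the extended Lie algebra `A ⊗[K] L`. -/
def tensorVec (A : Type*) [CommRing A] [Algebra K A] : (ι → A) ≃ₗ[A] A ⊗[K] L :=
  (Algebra.TensorProduct.basis A b).equivFun.symm

variable {A A' : Type*} [CommRing A] [Algebra K A] [CommRing A'] [Algebra K A']

lemma tensorVec_symm_apply (z : A ⊗[K] L) :
    (tensorVec b A).symm z = (Algebra.TensorProduct.basis A b).repr z := rfl

lemma tensorVec_single [DecidableEq ι] (i : ι) :
    tensorVec b A (Pi.single i 1) = Algebra.TensorProduct.basis A b i := by
  simp [tensorVec, Basis.equivFun_symm_apply, Pi.single_apply]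

section

variable [DecidableEq ι]

/-- The matrix of the adjoint action of the element of `A ⊗[K] L` with coordinates `c`. -/
def adMatrix (c : ι → A) : Matrix ι ι A :=
  LinearMap.toMatrix (Algebra.TensorProduct.basis A b) (Algebra.TensorProduct.basis A b)
    (ad A (A ⊗[K] L) (tensorVec b A c))

lemma adMatrix_apply (c : ι → A) (l j : ι) :
    adMatrix b c l j = ∑ i, c i * algebraMap K A (b.repr ⁅b i, b j⁆ l) := by
  rw [adMatrix, LinearMap.toMatrix_apply, tensorVec, Basis.equivFun_symm_apply, map_sum,
    LinearMap.sum_apply, map_sum, Finsupp.coe_finsetSum, Finset.sum_apply]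
  simp [Algebra.algebraMap_eq_smul_one]

lemma adMatrix_comp_algHom (φ : A →ₐ[K] A') (c : ι → A) :
    adMatrix b (φ ∘ c) = (adMatrix b c).map φ := by
  ext l j
  simp [adMatrix_apply]

lemma adMatrix_comp_derivation (D : Derivation K A A) (c : ι → A) :
    adMatrix b (D ∘ c) = (adMatrix b c).map D := by
  ext l j
  simp [adMatrix_apply, mul_comm]

lemma tensorVec_symm_lie (c d : ι → A) :
    (tensorVec b A).symm ⁅tensorVec b A c, tensorVec b A d⁆ = (adMatrix b c).mulVec d := by
  rw [tensorVec_symm_apply, ← ad_apply A, ← LinearMap.toMatrix_mulVec_repr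
    (Algebra.TensorProduct.basis A b), ← tensorVec_symm_apply, LinearEquiv.symm_apply_apply,
    adMatrix]

lemma adPowTrace_tensorVec (c d : ι → A) (j : ℕ) :
    adPowTrace A (tensorVec b A c) j (tensorVec b A d) =
      (adMatrix b c ^ j * adMatrix b d).trace := by
  rw [adPowTrace_apply, LinearMap.trace_eq_matrix_trace A (Algebra.TensorProduct.basis A b),
    LinearMap.toMatrix_mul, ← LinearMap.toMatrix_pow, adMatrix, adMatrix]

end

lemma adPowTrace_tensorVec_comp_algHom (φ : A →ₐ[K] A') (c : ι → A) (j : ℕ) (l : ι) :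
    adPowTrace A' (tensorVec b A' (φ ∘ c)) j (Algebra.TensorProduct.basis A' b l) =
      φ (adPowTrace A (tensorVec b A c) j (Algebra.TensorProduct.basis A b l)) := by
  classical
  have hsingle : (Pi.single l 1 : ι → A') = φ ∘ Pi.single l 1 := by
    ext i
    simp [Pi.single_apply, apply_ite φ]
  rw [← tensorVec_single, ← tensorVec_single, hsingle, adPowTrace_tensorVec, adPowTrace_tensorVec,
    adMatrix_comp_algHom, adMatrix_comp_algHom, ← φ.mapMatrix_apply, ← φ.mapMatrix_apply, ← map_pow,
    ← map_mul, φ.mapMatrix_apply]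
  exact (AddMonoidHom.map_trace φ _).symm

end Coordinates

lemma sum_adPowTrace_mul_repr_lie_eq_zero {R L ι : Type*} [CommRing R] [LieRing L] [LieAlgebra R L]
    [Fintype ι] (B : Basis ι R L) (x z : L) (j : ℕ) :
    ∑ l, adPowTrace R x j (B l) * B.repr ⁅x, z⁆ l = 0 := by
  calc ∑ l, adPowTrace R x j (B l) * B.repr ⁅x, z⁆ l
    _ = adPowTrace R x j (∑ l, B.repr ⁅x, z⁆ l • B l) := by simp only [map_sum, map_smul,
      smul_eq_mul, mul_comm]
    _ = 0 := by rw [B.sum_repr, adPowTrace_lie_eq_zero (lie_self x)]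

lemma isKilling_tensorProduct {K L : Type*} [Field K] [LieRing L] [LieAlgebra K L]
    [FiniteDimensional K L] [IsKilling K L] (F : Type*) [Field F] [Algebra K F] :
    IsKilling F (F ⊗[K] L) := by
  have b := Module.finBasis K L
  have hbaseChange : killingForm F (F ⊗[K] L) = (killingForm K L).baseChange F :=
    LieModule.traceForm_baseChange K L L F
  have hmatrix : LinearMap.BilinForm.toMatrix (Algebra.TensorProduct.basis F b)
      (killingForm F (F ⊗[K] L)) =
        (algebraMap K F).mapMatrix (LinearMap.BilinForm.toMatrix b (killingForm K L)) := by
    ext i j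
    simp [hbaseChange, LinearMap.BilinForm.toMatrix_apply, Algebra.algebraMap_eq_smul_one]
  have hnondeg : (killingForm F (F ⊗[K] L)).Nondegenerate := by
    rw [LinearMap.BilinForm.nondegenerate_iff_det_ne_zero (Algebra.TensorProduct.basis F b),
      hmatrix, ← RingHom.map_det, map_ne_zero]
    exact (LinearMap.BilinForm.nondegenerate_iff_det_ne_zero b).1
      (IsKilling.killingForm_nondegenerate K L)
  refine ⟨eq_bot_iff.2 fun z hz => hnondeg.2 z fun w => ?_⟩
  exact (LieIdeal.mem_killingCompl F (F ⊗[K] L) ⊤).1 hz w trivial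

section CommutingEquations

variable {K L ι : Type*} [Field K] [LieRing L] [LieAlgebra K L] [Fintype ι] (b : Basis ι K L)

/-- The equations of the commuting variety of `L`: the coordinates of the bracket of two generic
elements of `L`. -/
def commEq : ι → MvPolynomial (ι ⊕ ι) K :=
  (tensorVec b (MvPolynomial (ι ⊕ ι) K)).symm
    ⁅tensorVec b (MvPolynomial (ι ⊕ ι) K) (X ∘ Sum.inl),
      tensorVec b (MvPolynomial (ι ⊕ ι) K) (X ∘ Sum.inr)⁆

/-- The family `c` is a generic point of an irreducible component of the zero locus of the
polynomials `f`. -/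
def IsGenericZero {K F σ τ : Type*} [Field K] [Field F] [Algebra K F] (f : τ → MvPolynomial σ K)
    (c : σ → F) : Prop :=
  RingHom.ker (aeval c : MvPolynomial σ K →ₐ[K] F) ∈ (Ideal.span (Set.range f)).minimalPrimes

lemma aeval_comp_X_comp {K A σ τ : Type*} [CommRing K] [CommRing A] [Algebra K A] (c : σ → A)
    (s : τ → σ) : aeval c ∘ (X ∘ s : τ → MvPolynomial σ K) = c ∘ s := by
  ext i
  simp

lemma aeval_comp_commEq {A : Type*} [CommRing A] [Algebra K A] (c : ι ⊕ ι → A) :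
    aeval c ∘ commEq b =
      (tensorVec b A).symm ⁅tensorVec b A (c ∘ Sum.inl), tensorVec b A (c ∘ Sum.inr)⁆ := by
  classical
  rw [commEq, tensorVec_symm_lie, tensorVec_symm_lie, ← aeval_comp_X_comp (K := K) c Sum.inl,
    ← aeval_comp_X_comp (K := K) c Sum.inr, adMatrix_comp_algHom]
  ext l
  exact RingHom.map_mulVec (aeval c : MvPolynomial (ι ⊕ ι) K →ₐ[K] A).toRingHom _ _ l

variable {F : Type*} [Field F] [Algebra K F]

section

variable [FiniteDimensional K L] [IsKilling K L]

lemma height_ker_aeval_add_finrank_traceGradients_le {c : ι ⊕ ι → F}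
    (hc : IsGenericZero (commEq b) c)
    {a : ι → MvPolynomial (ι ⊕ ι) K} {z : MvPolynomial (ι ⊕ ι) K ⊗[K] L}
    (hz : tensorVec b _ (commEq b) = ⁅tensorVec b _ a, z⁆) :
    (RingHom.ker (aeval c : MvPolynomial (ι ⊕ ι) K →ₐ[K] F)).height +
      finrank F (traceGradients F (tensorVec b F (aeval c ∘ a))) ≤ Fintype.card ι := by
  have := isKilling_tensorProduct (K := K) (L := L) F
  let G : Matrix ℕ ι (MvPolynomial (ι ⊕ ι) K) := .of fun j l =>
    adPowTrace _ (tensorVec b _ a) j (Algebra.TensorProduct.basis _ b l)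
  have hG : G.mulVec (commEq b) = 0 := by
    ext1 j
    have := sum_adPowTrace_mul_repr_lie_eq_zero (Algebra.TensorProduct.basis _ b)
      (tensorVec b _ a) z j
    rwa [← hz, ← tensorVec_symm_apply, LinearEquiv.symm_apply_apply] at this
  have hrow : (G.map (aeval c : MvPolynomial (ι ⊕ ι) K →ₐ[K] F)).row =
      ((Algebra.TensorProduct.basis F b).constr F).symm ∘
        adPowTrace F (tensorVec b F (aeval c ∘ a)) := by
    ext j l
    exact (adPowTrace_tensorVec_comp_algHom b (aeval c) a j l).symm
  rw [finrank_traceGradients, ← LinearEquiv.finrank_map_eq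
    ((Algebra.TensorProduct.basis F b).constr F).symm, Submodule.map_span, LinearEquiv.coe_coe,
    ← Set.range_comp, ← hrow]
  exact height_add_finrank_span_syzygies_le
    (aeval c : MvPolynomial (ι ⊕ ι) K →ₐ[K] F).toRingHom hc hG

lemma tensorVec_derivation_mem_range_ad_sup_traceGradients [IsAlgClosed F]
    (D : Derivation K F F) (c : ι → F) :
    tensorVec b F (D ∘ c) ∈
      LinearMap.range (ad F _ (tensorVec b F c)) ⊔ traceGradients F (tensorVec b F c) := by
  classical
  have := isKilling_tensorProduct (K := K) (L := L) F
  refine mem_range_ad_sup_traceGradients fun z hz htrace => ?_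
  obtain ⟨d, rfl⟩ := (tensorVec b F).surjective z
  simp only [adPowTrace_tensorVec] at htrace
  have hcomm : Commute (adMatrix b c) (adMatrix b d) :=
    (commute_ad_of_lie_eq_zero hz).map
      (LinearMap.toMatrixAlgEquiv (Algebra.TensorProduct.basis F b))
  calc killingForm F (F ⊗[K] L) (tensorVec b F (D ∘ c)) (tensorVec b F d)
    _ = adPowTrace F (tensorVec b F (D ∘ c)) 1 (tensorVec b F d) := by
      rw [adPowTrace_apply, pow_one]
      rfl
    _ = ((adMatrix b c).map D * adMatrix b d).trace := by
      rw [adPowTrace_tensorVec, pow_one, adMatrix_comp_derivation]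
    _ = 0 := trace_map_derivation_mul_eq_zero (R := K) D hcomm htrace

end

lemma lie_tensorVec_derivation_add_lie (D : Derivation K F F) {x y : ι → F}
    (hxy : ⁅tensorVec b F x, tensorVec b F y⁆ = 0) :
    ⁅tensorVec b F (D ∘ x), tensorVec b F y⁆ + ⁅tensorVec b F x, tensorVec b F (D ∘ y)⁆ = 0 := by
  classical
  rw [← (tensorVec b F).symm.map_eq_zero_iff] at hxy ⊢
  rw [tensorVec_symm_lie] at hxy
  rw [map_add, tensorVec_symm_lie, tensorVec_symm_lie, adMatrix_comp_derivation]
  ext l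
  have hl := congrArg D (congrFun hxy l)
  simp only [Matrix.mulVec, dotProduct, Pi.zero_apply, map_zero, map_sum, Derivation.leibniz,
    smul_eq_mul, Finset.sum_add_distrib] at hl
  simp only [Matrix.mulVec, dotProduct, Pi.add_apply, Pi.zero_apply, Matrix.map_apply,
    Function.comp_apply, ← hl]
  rw [add_comm]
  simp only [mul_comm]

lemma isDeformationSpace_of_forall_exists_derivation [FiniteDimensional K L] [IsKilling K L]
    [IsAlgClosed F] {x y : ι → F} {Θ : Submodule F ((F ⊗[K] L) × (F ⊗[K] L))}
    (hxy : ⁅tensorVec b F x, tensorVec b F y⁆ = 0)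
    (hΘ : ∀ p ∈ Θ, ∃ D : Derivation K F F, p = (tensorVec b F (D ∘ x), tensorVec b F (D ∘ y)))
    (hdim : Fintype.card ι + finrank F (traceGradients F (tensorVec b F x)) ≤ finrank F Θ) :
    IsDeformationSpace (tensorVec b F x) (tensorVec b F y) Θ where
  lie_add_lie hp := by
    obtain ⟨D, rfl⟩ := hΘ _ hp
    exact lie_tensorVec_derivation_add_lie b D hxy
  fst_mem hp := by
    obtain ⟨D, rfl⟩ := hΘ _ hp
    exact tensorVec_derivation_mem_range_ad_sup_traceGradients b D x
  finrank_le := by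
    rwa [finrank_eq_card_basis (Algebra.TensorProduct.basis F b)]

variable (K) in
/-- The Zariski tangent space of the `K`-variety with generic point `c`, as a space of pairs of
elements of the extended Lie algebra. -/
def genericTangent (c : ι ⊕ ι → F) : Submodule F ((F ⊗[K] L) × (F ⊗[K] L)) :=
  (derivationValues K c).map ((LinearEquiv.sumArrowLequivProdArrow ι ι F F).trans
    (LinearEquiv.prodCongr (tensorVec b F) (tensorVec b F))).toLinearMap

lemma exists_derivation_of_mem_genericTangent {c : ι ⊕ ι → F} {p : (F ⊗[K] L) × (F ⊗[K] L)}
    (hp : p ∈ genericTangent K b c) : ∃ D : Derivation K F F,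
      p = (tensorVec b F (D ∘ c ∘ Sum.inl), tensorVec b F (D ∘ c ∘ Sum.inr)) := by
  obtain ⟨v, hv, rfl⟩ := hp
  obtain ⟨D, hD⟩ := mem_derivationValues_iff.1 hv
  obtain rfl : D ∘ c = v := funext hD
  exact ⟨D, rfl⟩

lemma card_add_finrank_traceGradients_le_finrank_genericTangent [CharZero K]
    [FiniteDimensional K L] [IsKilling K L] {c : ι ⊕ ι → F}
    (hc : IsGenericZero (commEq b) c)
    {a : ι → MvPolynomial (ι ⊕ ι) K} {z : MvPolynomial (ι ⊕ ι) K ⊗[K] L}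
    (hz : tensorVec b _ (commEq b) = ⁅tensorVec b _ a, z⁆) :
    Fintype.card ι + finrank F (traceGradients F (tensorVec b F (aeval c ∘ a))) ≤
      finrank F (genericTangent K b c) := by
  have hheight := height_ker_aeval_add_finrank_traceGradients_le b hc hz
  have hcard := card_le_finrank_derivationValues_add_height (K := K) c
  obtain ⟨h, hh⟩ := ENat.ne_top_iff_exists.1 (ne_top_of_le_ne_top (ENat.natCast_ne_top _)
    (le_self_add.trans hheight))
  rw [← hh] at hheight hcard
  rw [genericTangent, LinearEquiv.finrank_map_eq]
  norm_cast at hheight hcard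
  rw [Nat.card_eq_fintype_card, Fintype.card_sum] at hcard
  lia

section

lemma lie_tensorVec_comp_inl_comp_inr_eq_zero {c : ι ⊕ ι → F} (hc : IsGenericZero (commEq b) c) :
    ⁅tensorVec b F (c ∘ Sum.inl), tensorVec b F (c ∘ Sum.inr)⁆ = 0 := by
  rw [← (tensorVec b F).symm.map_eq_zero_iff, ← aeval_comp_commEq]
  ext l
  exact RingHom.mem_ker.1 (hc.1.2 (Ideal.subset_span (Set.mem_range_self l)))

variable [CharZero K] [FiniteDimensional K L] [IsKilling K L] [IsAlgClosed F] {c : ι ⊕ ι → F}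

lemma isDeformationSpace_genericTangent (hc : IsGenericZero (commEq b) c) :
    IsDeformationSpace (tensorVec b F (c ∘ Sum.inl)) (tensorVec b F (c ∘ Sum.inr))
      (genericTangent K b c) := by
  refine isDeformationSpace_of_forall_exists_derivation b
    (lie_tensorVec_comp_inl_comp_inr_eq_zero b hc)
    (fun p => exists_derivation_of_mem_genericTangent b) ?_
  rw [← aeval_comp_X_comp (K := K)]
  refine card_add_finrank_traceGradients_le_finrank_genericTangent b hc
    (z := tensorVec b _ (X ∘ Sum.inr)) ?_
  rw [commEq, LinearEquiv.apply_symm_apply]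

lemma isDeformationSpace_map_prodComm_genericTangent (hc : IsGenericZero (commEq b) c) :
    IsDeformationSpace (tensorVec b F (c ∘ Sum.inr)) (tensorVec b F (c ∘ Sum.inl))
      ((genericTangent K b c).map
        (LinearEquiv.prodComm F (F ⊗[K] L) (F ⊗[K] L)).toLinearMap) := by
  refine isDeformationSpace_of_forall_exists_derivation b ?_ ?_ ?_
  · rw [← lie_skew, lie_tensorVec_comp_inl_comp_inr_eq_zero b hc, neg_zero]
  · rintro _ ⟨p, hp, rfl⟩
    obtain ⟨D, rfl⟩ := exists_derivation_of_mem_genericTangent b hp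
    exact ⟨D, rfl⟩
  · rw [LinearEquiv.finrank_map_eq, ← aeval_comp_X_comp (K := K)]
    refine card_add_finrank_traceGradients_le_finrank_genericTangent b hc
      (z := -tensorVec b _ (X ∘ Sum.inl)) ?_
    rw [commEq, LinearEquiv.apply_symm_apply, lie_neg, lie_skew]

theorem IsGenericZero.algebraicIndependent_comp_inl (hc : IsGenericZero (commEq b) c) :
    AlgebraicIndependent K (c ∘ Sum.inl) := by
  classical
  have := isKilling_tensorProduct (K := K) (L := L) F
  refine algebraicIndependent_of_exists_derivation fun i => ?_
  obtain ⟨v, hv⟩ := (isDeformationSpace_genericTangent b hc).exists_mem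
    (lie_tensorVec_comp_inl_comp_inr_eq_zero b hc)
    (isDeformationSpace_map_prodComm_genericTangent b hc) (tensorVec b F (Pi.single i 1))
  obtain ⟨D, hD⟩ := exists_derivation_of_mem_genericTangent b hv
  exact ⟨D, congrFun ((tensorVec b F).injective (congrArg Prod.fst hD)).symm⟩

end

lemma exists_ker_aeval_eq {σ : Type*} (p : Ideal (MvPolynomial σ K)) [p.IsPrime] :
    ∃ c : σ → AlgebraicClosure (FractionRing (MvPolynomial σ K ⧸ p)),
      RingHom.ker (aeval c : MvPolynomial σ K →ₐ[K] _) = p := by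
  set F := AlgebraicClosure (FractionRing (MvPolynomial σ K ⧸ p))
  refine ⟨fun i => algebraMap (MvPolynomial σ K ⧸ p) F (Ideal.Quotient.mk p (X i)), ?_⟩
  have haeval : (aeval fun i => algebraMap (MvPolynomial σ K ⧸ p) F (Ideal.Quotient.mk p (X i))) =
      (IsScalarTower.toAlgHom K (MvPolynomial σ K ⧸ p) F).comp (Ideal.Quotient.mkₐ K p) := by
    ext i
    simp
  ext q
  rw [haeval, RingHom.mem_ker, ← Ideal.Quotient.eq_zero_iff_mem]
  refine map_eq_zero_iff (IsScalarTower.toAlgHom K (MvPolynomial σ K ⧸ p) F) ?_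
  rw [IsScalarTower.coe_toAlgHom', IsScalarTower.algebraMap_eq _ (FractionRing (_ ⧸ p)) F]
  exact (algebraMap (FractionRing (_ ⧸ p)) F).injective.comp (IsFractionRing.injective _ _)

theorem eq_zero_of_rename_inl_mem_of_mem_minimalPrimes [CharZero K] [FiniteDimensional K L]
    [IsKilling K L] {p : Ideal (MvPolynomial (ι ⊕ ι) K)}
    (hp : p ∈ (Ideal.span (Set.range (commEq b))).minimalPrimes) {q : MvPolynomial ι K}
    (hq : rename Sum.inl q ∈ p) : q = 0 := by
  have := hp.1.1
  obtain ⟨c, hc⟩ := exists_ker_aeval_eq p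
  have hgeneric : IsGenericZero (commEq b) c := by rwa [IsGenericZero, hc]
  rw [← hc, RingHom.mem_ker, aeval_rename] at hq
  exact algebraicIndependent_iff.1 (hgeneric.algebraicIndependent_comp_inl b) q hq

end CommutingEquations

end GenericPoint

/-! ### Polynomial functions and the Zariski topology -/

section PolynomialFunctions

open Module

variable {K V W : Type*} [Field K] [AddCommGroup V] [Module K V] [AddCommGroup W] [Module K W]

variable (K V) in
/-- The algebra of polynomial functions on a vector space, defined without coordinates as the
algebra generated by the linear functionals. -/
def polyFun : Subalgebra K (V → K) :=
  Algebra.adjoin K (Set.range fun l : Dual K V => (l : V → K))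

lemma dual_mem_polyFun (l : Dual K V) : ⇑l ∈ polyFun K V :=
  Algebra.subset_adjoin ⟨l, rfl⟩

lemma const_mem_polyFun (c : K) : (fun _ => c) ∈ polyFun K V :=
  (polyFun K V).algebraMap_mem c

lemma polyFun_eq_adjoin_range_coord {ι : Type*} [Finite ι] (b : Basis ι K V) :
    polyFun K V = Algebra.adjoin K (Set.range fun i => (b.coord i : V → K)) := by
  have := Fintype.ofFinite ι
  refine le_antisymm (Algebra.adjoin_le ?_) (Algebra.adjoin_mono ?_)
  · rintro _ ⟨l, rfl⟩
    have l_eq_sum : (l : V → K) = ∑ i, l (b i) • ⇑(b.coord i) := by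
      ext v
      conv_lhs => rw [← b.sum_repr v, map_sum]
      simp [mul_comm]
    change (l : V → K) ∈ Algebra.adjoin K _
    rw [l_eq_sum]
    exact sum_mem fun i _ => Subalgebra.smul_mem _ (Algebra.subset_adjoin (Set.mem_range_self i)) _
  · exact Set.range_subset_iff.2 fun i => ⟨b.coord i, rfl⟩

lemma mem_polyFun_iff {ι : Type*} [Finite ι] (b : Basis ι K V) {f : V → K} :
    f ∈ polyFun K V ↔ ∃ p : MvPolynomial ι K, ∀ v, f v = MvPolynomial.aeval (b.repr v) p := by
  have aeval_coord_apply (p : MvPolynomial ι K) (v : V) :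
      MvPolynomial.aeval (fun i => (b.coord i : V → K)) p v = MvPolynomial.aeval (b.repr v) p :=
    (MvPolynomial.comp_aeval_apply _ (Pi.evalAlgHom K (fun _ : V => K) v) p).trans rfl
  rw [polyFun_eq_adjoin_range_coord b, Algebra.adjoin_range_eq_range_aeval, AlgHom.mem_range]
  simp only [funext_iff, aeval_coord_apply, eq_comm]

lemma comp_mem_polyFun {f : V → K} (hf : f ∈ polyFun K V) {A : W → V}
    (hA : ∀ l : Dual K V, (fun w => l (A w)) ∈ polyFun K W) :
    (fun w => f (A w)) ∈ polyFun K W := by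
  induction hf using Algebra.adjoin_induction with
  | mem f hf =>
    obtain ⟨l, rfl⟩ := hf
    exact hA l
  | algebraMap c => exact const_mem_polyFun c
  | add f f' _ _ hf hf' => exact add_mem hf hf'
  | mul f f' _ _ hf hf' => exact mul_mem hf hf'

lemma comp_linearMap_mem_polyFun {f : V → K} (hf : f ∈ polyFun K V) (A : W →ₗ[K] V) :
    (fun w => f (A w)) ∈ polyFun K W :=
  comp_mem_polyFun hf fun l => dual_mem_polyFun (l ∘ₗ A)

lemma comp_add_linearMap_mem_polyFun {f : V → K} (hf : f ∈ polyFun K V) (v : V)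
    (A : W →ₗ[K] V) : (fun w => f (v + A w)) ∈ polyFun K W := by
  refine comp_mem_polyFun hf fun l => ?_
  simp only [map_add]
  exact add_mem (const_mem_polyFun (l v)) (dual_mem_polyFun (l ∘ₗ A))

lemma sum_mem_polyFun {ι : Type*} {s : Finset ι} {f : ι → V → K}
    (hf : ∀ i ∈ s, f i ∈ polyFun K V) : (fun v => ∑ i ∈ s, f i v) ∈ polyFun K V := by
  simpa only [Finset.sum_fn] using sum_mem hf

section Matrix

variable {n : Type*} [Fintype n] [DecidableEq n] {M : V → Matrix n n K}

lemma det_mem_polyFun (hM : ∀ i j, (fun v => M v i j) ∈ polyFun K V) :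
    (fun v => (M v).det) ∈ polyFun K V := by
  simp only [Matrix.det_apply]
  refine sum_mem_polyFun fun σ _ => (polyFun K V).zsmul_mem ?_ _
  simpa only [Finset.prod_fn] using prod_mem fun i (_ : i ∈ Finset.univ) => hM (σ i) i

lemma toMatrix_mem_polyFun {A : V → Module.End K W}
    (hA : ∀ (l : Dual K W) (w : W), (fun v => l (A v w)) ∈ polyFun K V)
    (b : Basis n K W) (i j : n) :
    (fun v => LinearMap.toMatrix b b (A v) i j) ∈ polyFun K V := by
  simp only [LinearMap.toMatrix_apply]
  exact hA (b.coord i) (b j)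

lemma pow_apply_mem_polyFun (hM : ∀ i j, (fun v => M v i j) ∈ polyFun K V) (q : ℕ) (i j : n) :
    (fun v => (M v ^ q) i j) ∈ polyFun K V := by
  induction q generalizing j with
  | zero => simpa only [pow_zero] using const_mem_polyFun _
  | succ q ih =>
    simp only [pow_succ, Matrix.mul_apply]
    exact sum_mem_polyFun fun l _ => mul_mem (ih l) (hM l j)

lemma cramer_mem_polyFun (hM : ∀ i j, (fun v => M v i j) ∈ polyFun K V) {c : V → n → K}
    (hc : ∀ i, (fun v => c v i) ∈ polyFun K V) (j : n) :
    (fun v => (M v).cramer (c v) j) ∈ polyFun K V := by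
  simp only [Matrix.cramer_apply]
  refine det_mem_polyFun fun i l => ?_
  rcases eq_or_ne l j with rfl | hl
  · simpa only [Matrix.updateCol_self] using hc i
  · simpa only [Matrix.updateCol_ne hl] using hM i l

end Matrix

variable [FiniteDimensional K V]

lemma exists_ne_zero_and_ne_zero_of_mem_polyFun [Infinite K] {f f' : V → K}
    (hf : f ∈ polyFun K V) (hf' : f' ∈ polyFun K V) (hne : ∃ v, f v ≠ 0) (hne' : ∃ v, f' v ≠ 0) :
    ∃ v, f v ≠ 0 ∧ f' v ≠ 0 := by
  let b := finBasis K V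
  obtain ⟨p, hp⟩ := (mem_polyFun_iff b).1 hf
  obtain ⟨p', hp'⟩ := (mem_polyFun_iff b).1 hf'
  by_contra! hdisj
  have mul_eq_zero : p * p' = 0 := by
    refine MvPolynomial.funext fun c => ?_
    obtain ⟨v, rfl⟩ := b.equivFun.surjective c
    have hv : f v * f' v = 0 := mul_eq_zero.2 (or_iff_not_imp_left.2 (hdisj v))
    rwa [hp, hp', ← map_mul] at hv
  rcases _root_.mul_eq_zero.1 mul_eq_zero with rfl | rfl
  · exact hne.elim fun v hv => hv (by rw [hp, map_zero])
  · exact hne'.elim fun v hv => hv (by rw [hp', map_zero])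

lemma mem_polyFun_iff_evalP {f : V → K} :
    f ∈ polyFun K V ↔ ∃ p, ∀ v, f v = CV.evalP K V p v :=
  mem_polyFun_iff (Free.chooseBasis K V)

lemma isOpen_zar_ne_zero {f : V → K} (hf : f ∈ polyFun K V) :
    @IsOpen V (CV.zar K V) {v | f v ≠ 0} := by
  obtain ⟨p, hp⟩ := mem_polyFun_iff_evalP.1 hf
  exact TopologicalSpace.isOpen_generateFrom_of_mem ⟨p, by simp only [hp]⟩

lemma exists_mem_polyFun_of_isOpen_zar {O : Set V} (hO : @IsOpen V (CV.zar K V) O) {v : V}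
    (hv : v ∈ O) : ∃ f ∈ polyFun K V, f v ≠ 0 ∧ {w | f w ≠ 0} ⊆ O := by
  induction hO with
  | basic s hs =>
    obtain ⟨p, rfl⟩ := hs
    exact ⟨CV.evalP K V p, mem_polyFun_iff_evalP.2 ⟨p, fun _ => rfl⟩, hv, subset_rfl⟩
  | univ => exact ⟨1, one_mem _, one_ne_zero, Set.subset_univ _⟩
  | inter s t _ _ hs ht =>
    obtain ⟨f, hf, hfv, hfs⟩ := hs hv.1
    obtain ⟨f', hf', hfv', hft⟩ := ht hv.2
    exact ⟨f * f', mul_mem hf hf', mul_ne_zero hfv hfv', fun w hw =>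
      ⟨hfs (left_ne_zero_of_mul hw), hft (right_ne_zero_of_mul hw)⟩⟩
  | sUnion S _ hS =>
    obtain ⟨s, hs, hvs⟩ := hv
    obtain ⟨f, hf, hfv, hfs⟩ := hS s hs hvs
    exact ⟨f, hf, hfv, hfs.trans (Set.subset_sUnion_of_mem hs)⟩

lemma mem_closure_zar_of_forall_polyFun {S : Set V} {v : V}
    (h : ∀ f ∈ polyFun K V, (∀ w ∈ S, f w = 0) → f v = 0) : v ∈ @closure V (CV.zar K V) S := by
  rw [@mem_closure_iff _ (CV.zar K V)]
  intro O hO hvO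
  obtain ⟨f, hf, hfv, hfO⟩ := exists_mem_polyFun_of_isOpen_zar hO hvO
  by_contra! hdisj
  refine hfv (h f hf fun w hw => ?_)
  by_contra hfw
  exact Set.notMem_empty w (hdisj ▸ ⟨hfO hfw, hw⟩)

lemma dense_zar_ne_zero [Infinite K] {f : V → K} (hf : f ∈ polyFun K V) (hne : ∃ v, f v ≠ 0) :
    @Dense V (CV.zar K V) {v | f v ≠ 0} := by
  refine fun v => mem_closure_zar_of_forall_polyFun fun f' hf' hvanish => ?_
  by_contra hf'v
  obtain ⟨w, hfw, hf'w⟩ := exists_ne_zero_and_ne_zero_of_mem_polyFun hf hf' hne ⟨v, hf'v⟩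
  exact hf'w (hvanish w hfw)

lemma exists_evalP_div_of_polyFun {ι : Type*} {S : Set V} {u : ι → V → K} {d : V → K}
    (hd : d ∈ polyFun K V) (hdS : ∀ v ∈ S, d v ≠ 0)
    (hu : ∀ i, ∃ p ∈ polyFun K V, ∀ v ∈ S, u i v = p v / d v) :
    ∃ (p : ι → MvPolynomial (Free.ChooseBasisIndex K V) K)
      (q : MvPolynomial (Free.ChooseBasisIndex K V) K),
      (∀ v ∈ S, CV.evalP K V q v ≠ 0) ∧
        ∀ v ∈ S, ∀ i, u i v = CV.evalP K V (p i) v / CV.evalP K V q v := by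
  obtain ⟨q, hq⟩ := mem_polyFun_iff_evalP.1 hd
  choose p hp hup using hu
  choose P hP using fun i => mem_polyFun_iff_evalP.1 (hp i)
  refine ⟨P, q, fun v hv => hq v ▸ hdS v hv, fun v hv i => ?_⟩
  rw [← hP, ← hq, hup i v hv]

lemma exists_evalP_div_linearMap {ι : Type*} (f : V →ₗ[K] ι → K) (S : Set V) :
    ∃ (p : ι → MvPolynomial (Free.ChooseBasisIndex K V) K)
      (q : MvPolynomial (Free.ChooseBasisIndex K V) K),
      (∀ v ∈ S, CV.evalP K V q v ≠ 0) ∧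
        ∀ v ∈ S, ∀ i, f v i = CV.evalP K V (p i) v / CV.evalP K V q v :=
  exists_evalP_div_of_polyFun (d := 1) (one_mem _) (fun _ _ => one_ne_zero) fun i =>
    ⟨_, dual_mem_polyFun (LinearMap.proj i ∘ₗ f), fun _ _ => (div_one _).symm⟩

end PolynomialFunctions

/-! ### Density of commuting pairs with prescribed first component -/

section Density

open Module MvPolynomial

section BasisProd

variable {R M M' ι ι' : Type*} [Semiring R] [AddCommMonoid M] [Module R M] [AddCommMonoid M']
  [Module R M'] (b : Basis ι R M) (b' : Basis ι' R M') (x : M) (y : M')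

lemma prod_repr_comp_inl : (b.prod b').repr (x, y) ∘ Sum.inl = b.repr x :=
  funext fun _ => by simp

lemma prod_repr_comp_inr : (b.prod b').repr (x, y) ∘ Sum.inr = b'.repr y :=
  funext fun _ => by simp

end BasisProd

variable {K L ι : Type*} [Field K] [LieRing L] [LieAlgebra K L] [Fintype ι] (b : Basis ι K L)

lemma tensorVec_repr (x : L) : tensorVec b K (b.repr x) = 1 ⊗ₜ x := by
  rw [← LinearEquiv.eq_symm_apply, tensorVec_symm_apply]
  ext i
  simp

lemma aeval_prod_repr_commEq (x y : L) (l : ι) :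
    aeval ((b.prod b).repr (x, y)) (commEq b l) = b.repr ⁅x, y⁆ l := by
  have hcomp := congrFun (aeval_comp_commEq b ((b.prod b).repr (x, y))) l
  rwa [prod_repr_comp_inl, prod_repr_comp_inr, tensorVec_repr, tensorVec_repr,
    LieAlgebra.ExtendScalars.bracket_tmul, mul_one, ← tensorVec_repr b,
    LinearEquiv.symm_apply_apply] at hcomp

lemma prod_repr_mem_zeroLocus_iff (x y : L) :
    ⇑((b.prod b).repr (x, y)) ∈ zeroLocus K (Ideal.span (Set.range (commEq b))) ↔
      ⁅x, y⁆ = 0 := by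
  rw [zeroLocus_span]
  simp only [Set.mem_ofPred_eq, Set.forall_mem_range, aeval_prod_repr_commEq]
  rw [← b.repr.map_eq_zero_iff, Finsupp.ext_iff]
  rfl

theorem eq_zero_of_forall_lie_eq_zero_of_isKilling [IsAlgClosed K] [CharZero K]
    [FiniteDimensional K L] [LieAlgebra.IsKilling K L] {δ : L → K} (hδ : δ ∈ polyFun K L)
    (hne : ∃ x, δ x ≠ 0) {φ : L × L → K} (hφ : φ ∈ polyFun K (L × L))
    (hvanish : ∀ x y : L, ⁅x, y⁆ = 0 → δ x ≠ 0 → φ (x, y) = 0) {x y : L} (hxy : ⁅x, y⁆ = 0) :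
    φ (x, y) = 0 := by
  let b := finBasis K L
  obtain ⟨p, hp⟩ := (mem_polyFun_iff b).1 hδ
  obtain ⟨q, hq⟩ := (mem_polyFun_iff (b.prod b)).1 hφ
  set I := Ideal.span (Set.range (commEq b))
  have mul_mem_radical : rename Sum.inl p * q ∈ I.radical := by
    rw [← vanishingIdeal_zeroLocus_eq_radical (K := K) I, mem_vanishingIdeal_iff]
    intro c hc
    obtain ⟨⟨u, v⟩, rfl⟩ := (b.prod b).equivFun.surjective c
    have hu : aeval ((b.prod b).repr (u, v)) (rename Sum.inl p) = δ u := by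
      rw [aeval_rename, prod_repr_comp_inl, hp]
    rw [Basis.equivFun_apply, map_mul, hu, ← hq, mul_eq_zero, or_iff_not_imp_left]
    exact hvanish u v ((prod_repr_mem_zeroLocus_iff b u v).1 hc)
  have mem_radical : q ∈ I.radical := by
    rw [← Ideal.sInf_minimalPrimes, Ideal.mem_sInf]
    intro P hP
    refine (hP.1.1.mem_or_mem ((hP.1.1.radical_le_iff.2 hP.1.2) mul_mem_radical)).resolve_left ?_
    intro hpP
    have p_eq_zero := eq_zero_of_rename_inl_mem_of_mem_minimalPrimes b hP hpP
    exact hne.elim fun u hu => hu (by rw [hp, p_eq_zero, map_zero])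
  rw [← vanishingIdeal_zeroLocus_eq_radical (K := K) I, mem_vanishingIdeal_iff] at mem_radical
  rw [hq]
  exact mem_radical _ ((prod_repr_mem_zeroLocus_iff b x y).2 hxy)

end Density

/-! ### The minimal dimension of a centralizer -/

section Centralizer

open Module LieAlgebra

section Semicontinuity

variable {K V W J : Type*} [Field K] [AddCommGroup V] [Module K V] [AddCommGroup W] [Module K W]
  [FiniteDimensional K W]

lemma card_le_finrank_span_range_of_det_ne_zero {n : Type*} [Fintype n] [DecidableEq n]
    {f : J → Dual K W} {a : n → J} {w : n → W}
    (hdet : (Matrix.of fun i j => f (a i) (w j)).det ≠ 0) :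
    Fintype.card n ≤ finrank K (Submodule.span K (Set.range f)) := by
  let evalAt : Dual K W →ₗ[K] n → K := LinearMap.pi fun j => Dual.eval K W (w j)
  have hindep : LinearIndependent K (f ∘ a) :=
    .of_comp evalAt (Matrix.linearIndependent_rows_of_det_ne_zero hdet)
  rw [← finrank_span_eq_card hindep]
  exact Submodule.finrank_mono (Submodule.span_mono (Set.range_comp_subset_range a f))

theorem exists_polyFun_finrank_span_range_le {f : V → J → Dual K W}
    (hf : ∀ j w, (fun v => f v j w) ∈ polyFun K V) (v : V) :
    ∃ δ ∈ polyFun K V, δ v ≠ 0 ∧ ∀ u, δ u ≠ 0 →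
      finrank K (Submodule.span K (Set.range (f v))) ≤
        finrank K (Submodule.span K (Set.range (f u))) := by
  let b := finBasis K W
  let M : V → Matrix J (Fin (finrank K W)) K := fun u => .of fun j l => f u j (b l)
  have finrank_span_row : finrank K (Submodule.span K (Set.range (M v).row)) =
      finrank K (Submodule.span K (Set.range (f v))) := by
    let coords : Dual K W ≃ₗ[K] Fin (finrank K W) → K := (b.constr K).symm
    rw [← coords.finrank_map_eq, Submodule.map_span, ← Set.range_comp]
    rfl
  obtain ⟨a, c, hdet⟩ := exists_det_submatrix_ne_zero (M v) finrank_span_row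
  refine ⟨fun u => ((M u).submatrix a c).det, det_mem_polyFun fun i j => hf _ _, hdet,
    fun u hu => ?_⟩
  simpa using card_le_finrank_span_range_of_det_ne_zero (f := f u) (w := b ∘ c) hu

end Semicontinuity

variable {K L : Type*} [Field K] [LieRing L] [LieAlgebra K L]

lemma dual_ad_mem_polyFun (l : Dual K L) (y : L) : (fun x => l (ad K L x y)) ∈ polyFun K L :=
  dual_mem_polyFun (l ∘ₗ (ad K L : L →ₗ[K] Module.End K L).flip y)

lemma traceGradients_le_cent [IsKilling K L] (x : L) : traceGradients K x ≤ cent K x := by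
  intro u hu
  rw [mem_cent_iff, ← lie_skew, lie_eq_zero_of_mem_traceGradients hu (lie_self x), neg_zero]

lemma cent_eq_of_le_traceGradients [IsKilling K L] {H : LieSubalgebra K L}
    [H.IsCartanSubalgebra] {h : L} (hle : H.toSubmodule ≤ traceGradients K h) :
    cent K h = H.toSubmodule := by
  refine le_antisymm (fun z hz => ?_) (hle.trans (traceGradients_le_cent h))
  have hnorm : z ∈ H.normalizer := (LieSubalgebra.mem_normalizer_iff' _ _).2 fun y hy => by
    rw [lie_eq_zero_of_mem_traceGradients (hle hy) hz]
    exact H.zero_mem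
  rwa [LieSubalgebra.IsCartanSubalgebra.self_normalizing] at hnorm

variable [FiniteDimensional K L]

lemma adPowTrace_mem_polyFun (j : ℕ) (w : L) : (fun x => adPowTrace K x j w) ∈ polyFun K L := by
  let b := finBasis K L
  have htrace (x : L) : adPowTrace K x j w = ∑ i, ∑ l,
      (LinearMap.toMatrix b b (ad K L x) ^ j) i l * LinearMap.toMatrix b b (ad K L w) l i := by
    rw [adPowTrace_apply, LinearMap.trace_eq_matrix_trace K b, LinearMap.toMatrix_mul,
      LinearMap.toMatrix_pow]
    simp only [Matrix.trace, Matrix.diag_apply, Matrix.mul_apply]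
  simp only [htrace]
  exact sum_mem_polyFun fun i _ => sum_mem_polyFun fun l _ =>
    mul_mem (pow_apply_mem_polyFun (toMatrix_mem_polyFun dual_ad_mem_polyFun b) j i l)
      (const_mem_polyFun _)

lemma finrank_range_dualMap_ad_add_finrank_cent (x : L) :
    finrank K (Submodule.span K (Set.range (ad K L x).dualMap)) + finrank K (cent K x) =
      finrank K L := by
  rw [← LinearMap.coe_range, Submodule.span_eq,
    LinearMap.finrank_range_dualMap_eq_finrank_range]
  exact LinearMap.finrank_range_add_finrank_ker _

lemma exists_injective_weight_apply [Infinite K] (H : LieSubalgebra K L)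
    [LieRing.IsNilpotent H] [LieModule.LinearWeights K H L] :
    ∃ h : H, Function.Injective fun χ : LieModule.Weight K H L => χ h := by
  obtain ⟨h, hh⟩ := Dual.exists_forall_ne_zero_of_forall_exists (K := K) (M := H)
    (ι := {p : LieModule.Weight K H L × LieModule.Weight K H L // p.1 ≠ p.2})
    (fun p => p.1.1.toLinear - p.1.2.toLinear) (by
      rintro ⟨⟨α, β⟩, hne⟩
      by_contra! heq
      exact hne (LieModule.Weight.ext fun x => by simpa [sub_eq_zero] using heq x))
  refine ⟨h, fun α β hαβ => ?_⟩
  by_contra hne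
  exact hh ⟨(α, β), hne⟩ (by simpa [sub_eq_zero] using hαβ)

variable [IsKilling K L]

theorem finrank_traceGradients_le_finrank_cent [Infinite K] (x y : L) :
    finrank K (traceGradients K x) ≤ finrank K (cent K y) := by
  obtain ⟨δ, hδ, hδx, hle⟩ := exists_polyFun_finrank_span_range_le (f := adPowTrace K)
    adPowTrace_mem_polyFun x
  obtain ⟨ε, hε, hεy, hle'⟩ := exists_polyFun_finrank_span_range_le
    (f := fun x => (ad K L x).dualMap)
    dual_ad_mem_polyFun y
  obtain ⟨z, hδz, hεz⟩ := exists_ne_zero_and_ne_zero_of_mem_polyFun hδ hε ⟨x, hδx⟩ ⟨y, hεy⟩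
  calc finrank K (traceGradients K x)
      ≤ finrank K (traceGradients K z) := by
        rw [finrank_traceGradients, finrank_traceGradients]
        exact hle z hδz
    _ ≤ finrank K (cent K z) := Submodule.finrank_mono (traceGradients_le_cent z)
    _ ≤ finrank K (cent K y) := by
        have := hle' z hεz
        have := finrank_range_dualMap_ad_add_finrank_cent (K := K) y
        have := finrank_range_dualMap_ad_add_finrank_cent (K := K) z
        lia

section Cartan

variable [IsAlgClosed K] [CharZero K] (H : LieSubalgebra K L) [H.IsCartanSubalgebra]

lemma ad_mem_adjoin_of_injective_weight_apply {h : H}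
    (hinj : Function.Injective fun χ : LieModule.Weight K H L => χ h) (w : H) :
    ad K L w ∈ Algebra.adjoin K {ad K L (h : L)} := by
  classical
  let p := Lagrange.interpolate Finset.univ (fun χ : LieModule.Weight K H L => χ h) fun χ => χ w
  suffices ad K L w = Polynomial.aeval (ad K L (h : L)) p from
    this ▸ Polynomial.aeval_mem_adjoin_singleton K _
  ext z
  have hz : z ∈ ⨆ χ : LieModule.Weight K H L, (LieModule.genWeightSpace L χ).toSubmodule := by
    rw [← LieSubmodule.iSup_toSubmodule, LieModule.iSup_genWeightSpace_eq_top' K H L]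
    trivial
  induction hz using Submodule.iSup_induction' with
  | mem χ z hz =>
    have ad_apply_eq_smul (u : H) : ad K L (u : L) z = χ u • z :=
      IsKilling.lie_eq_smul_of_mem_rootSpace hz u
    have eval_p : p.eval (χ h) = χ w :=
      Lagrange.eval_interpolate_at_node _ hinj.injOn (Finset.mem_univ χ)
    rcases eq_or_ne z 0 with rfl | hz0
    · simp
    · rw [Module.End.aeval_apply_of_hasEigenvector
        ⟨Module.End.mem_eigenspace_iff.2 (ad_apply_eq_smul h), hz0⟩, eval_p, ad_apply_eq_smul]
  | zero => simp
  | add z z' _ _ hz hz' => rw [map_add, map_add, hz, hz']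

theorem exists_forall_mem_traceGradients : ∃ h : L, H.toSubmodule ≤ traceGradients K h := by
  obtain ⟨h, hinj⟩ := exists_injective_weight_apply (K := K) H
  exact ⟨h, fun w hw => mem_traceGradients_of_ad_mem_adjoin
    (ad_mem_adjoin_of_injective_weight_apply H hinj ⟨w, hw⟩)⟩

theorem exists_cent_eq_and_forall_finrank_cent_le :
    ∃ h : L, cent K h = H.toSubmodule ∧ ∀ x : L, finrank K (cent K h) ≤ finrank K (cent K x) := by
  obtain ⟨h, hle⟩ := exists_forall_mem_traceGradients (K := K) H
  have hcent := cent_eq_of_le_traceGradients hle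
  refine ⟨h, hcent, fun x => ?_⟩
  rw [hcent]
  exact (Submodule.finrank_mono hle).trans (finrank_traceGradients_le_finrank_cent h x)

end Cartan

end Centralizer

/-! ### Central extensions of semisimple Lie algebras -/

section CentralExtension

open Module LieAlgebra

lemma finrank_comap_of_surjective {K V W : Type*} [Field K] [AddCommGroup V] [Module K V]
    [AddCommGroup W] [Module K W] [FiniteDimensional K V] {f : V →ₗ[K] W}
    (hf : Function.Surjective f) (S : Submodule K W) :
    finrank K (S.comap f) = finrank K S + finrank K (LinearMap.ker f) := by
  rw [← LinearMap.finrank_range_add_finrank_ker (f.domRestrict (S.comap f))]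
  congr 1
  · rw [LinearMap.range_domRestrict, Submodule.map_comap_eq_of_surjective hf]
  · rw [LinearMap.ker_domRestrict]
    exact (Submodule.comapSubtypeEquivOfLe (LinearMap.ker_le_comap f)).finrank_eq

section Whitehead

variable {K M : Type*} [Field K] [LieRing M] [LieAlgebra K M]
  [FiniteDimensional K M] [IsKilling K M]

-- The Killing form turns a cocycle into a derivation, and derivations are inner.
theorem exists_dual_of_forall_cocycle {ω : M →ₗ[K] Dual K M}
    (hω : ∀ a b c, ω ⁅a, b⁆ c = ω a ⁅b, c⁆ - ω b ⁅a, c⁆) :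
    ∃ f : Dual K M, ∀ a b, ω a b = f ⁅a, b⁆ := by
  have hκ := IsKilling.killingForm_nondegenerate K M
  have lie_apply (a b c : M) : killingForm K M ⁅a, b⁆ c = killingForm K M a ⁅b, c⁆ :=
    LieModule.traceForm_apply_lie_apply K M M a b c
  let D₀ : M →ₗ[K] M := ((killingForm K M).toDual hκ).symm.toLinearMap ∘ₗ ω
  have killingForm_D₀ (a b : M) : killingForm K M (D₀ a) b = ω a b :=
    LinearMap.BilinForm.apply_toDual_symm_apply (hB := hκ) (ω a) b
  have leibniz (a b : M) : D₀ ⁅a, b⁆ = ⁅a, D₀ b⁆ - ⁅b, D₀ a⁆ := by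
    rw [← sub_eq_zero]
    refine hκ.1 _ fun c => ?_
    rw [← lie_skew a (D₀ b), ← lie_skew b (D₀ a), LinearMap.BilinForm.sub_left,
      LinearMap.BilinForm.sub_left, LinearMap.BilinForm.neg_left, LinearMap.BilinForm.neg_left,
      lie_apply, lie_apply, killingForm_D₀, killingForm_D₀, killingForm_D₀, hω]
    ring
  obtain ⟨d, hd⟩ := LieDerivation.IsKilling.exists_eq_ad (⟨D₀, leibniz⟩ : LieDerivation K M M)
  have D₀_eq_lie (a : M) : D₀ a = ⁅d, a⁆ := by
    rw [← LieDerivation.ad_apply_apply K, hd]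
    rfl
  exact ⟨killingForm K M d, fun a b => by rw [← killingForm_D₀, D₀_eq_lie, lie_apply]⟩

end Whitehead

variable {K L M : Type*} [Field K] [LieRing L] [LieAlgebra K L] [LieRing M] [LieAlgebra K M]
  {π : L →ₗ⁅K⁆ M}

lemma mem_center_iff_forall_lie_eq_zero {x : L} : x ∈ center K L ↔ ∀ y : L, ⁅x, y⁆ = 0 := by
  rw [LieModule.mem_maxTrivSubmodule]
  exact forall_congr' fun y => by rw [← lie_skew, neg_eq_zero]

lemma lie_eq_lie_of_map_eq_map (hker : π.ker ≤ center K L) {x x' y y' : L} (hx : π x = π x')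
    (hy : π y = π y') : ⁅x, y⁆ = ⁅x', y'⁆ := by
  have lie_eq_zero {u v : L} (huv : π u = π v) (w : L) : ⁅u - v, w⁆ = 0 :=
    mem_center_iff_forall_lie_eq_zero.1 (hker (by rw [LieHom.mem_ker, map_sub, huv, sub_self])) w
  calc ⁅x, y⁆ = ⁅x', y⁆ := by rw [← sub_eq_zero, ← sub_lie, lie_eq_zero hx]
    _ = ⁅x', y'⁆ := by rw [← sub_eq_zero, ← lie_sub, ← lie_skew, lie_eq_zero hy, neg_zero]

lemma exists_linearMap_forall_map_eq (hπ : Function.Surjective π) :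
    ∃ σ : M →ₗ[K] L, ∀ a, π (σ a) = a := by
  obtain ⟨σ, hσ⟩ := LinearMap.exists_rightInverse_of_surjective (π : L →ₗ[K] M)
    (LinearMap.range_eq_top.2 hπ)
  exact ⟨σ, LinearMap.congr_fun hσ⟩

lemma isNilpotent_map (t : LieSubalgebra K L) [LieRing.IsNilpotent t] :
    LieRing.IsNilpotent (t.map π) := by
  have range_eq : (π.comp t.incl).range = t.map π := by
    ext y
    simp [LieSubalgebra.mem_map]
  rw [← range_eq]
  exact (π.comp t.incl).isNilpotent_range

section Cartan

variable (t : LieSubalgebra K L) [t.IsCartanSubalgebra]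

lemma mem_of_map_mem_map_of_isCartanSubalgebra (hker : π.ker ≤ center K L) {x : L}
    (hx : π x ∈ t.map π) : x ∈ t := by
  obtain ⟨y, hy, hxy⟩ := (LieSubalgebra.mem_map _ _ _).1 hx
  have hsub : x - y ∈ t.normalizer := (LieSubalgebra.mem_normalizer_iff _ _).2 fun z _ => by
    rw [lie_eq_lie_of_map_eq_map hker (x' := 0) (y' := z) (by simp [← hxy]) rfl, zero_lie]
    exact t.zero_mem
  rw [LieSubalgebra.IsCartanSubalgebra.self_normalizing] at hsub
  simpa using t.add_mem hsub hy

lemma comap_map_eq_of_isCartanSubalgebra (hker : π.ker ≤ center K L) :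
    (t.map π).toSubmodule.comap (π : L →ₗ[K] M) = t.toSubmodule :=
  le_antisymm (fun _ => mem_of_map_mem_map_of_isCartanSubalgebra t hker)
    (Submodule.le_comap_map _ _)

theorem isCartanSubalgebra_map (hπ : Function.Surjective π) (hker : π.ker ≤ center K L) :
    (t.map π).IsCartanSubalgebra where
  nilpotent := isNilpotent_map t
  self_normalizing := by
    refine le_antisymm (fun y hy => ?_) (LieSubalgebra.le_normalizer _)
    obtain ⟨x, rfl⟩ := hπ y
    have hx : x ∈ t.normalizer := (LieSubalgebra.mem_normalizer_iff _ _).2 fun u hu =>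
      mem_of_map_mem_map_of_isCartanSubalgebra t hker <| by
        rw [LieHom.map_lie]
        exact (LieSubalgebra.mem_normalizer_iff _ _).1 hy _ (Submodule.mem_map_of_mem hu)
    rw [LieSubalgebra.IsCartanSubalgebra.self_normalizing] at hx
    exact Submodule.mem_map_of_mem hx

end Cartan

variable [FiniteDimensional K M] [IsKilling K M]

theorem lie_eq_zero_iff_map_lie_map_eq_zero (hπ : Function.Surjective π) (hker : π.ker ≤ center K L)
    {x y : L} : ⁅x, y⁆ = 0 ↔ ⁅π x, π y⁆ = 0 := by
  refine ⟨fun h => by rw [← LieHom.map_lie, h, map_zero], fun h => ?_⟩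
  rw [← forall_dual_apply_eq_zero_iff K]
  intro ℓ
  obtain ⟨σ, hσ⟩ := exists_linearMap_forall_map_eq hπ
  let ω : M →ₗ[K] Dual K M := ((ad K L : L →ₗ[K] Module.End K L).compl₁₂ σ σ).compr₂ ℓ
  have lie_σ_lie (a b c : M) : ⁅σ a, σ ⁅b, c⁆⁆ = ⁅σ a, ⁅σ b, σ c⁆⁆ :=
    lie_eq_lie_of_map_eq_map hker rfl (by simp only [hσ, LieHom.map_lie])
  have cocycle (a b c : M) : ω ⁅a, b⁆ c = ω a ⁅b, c⁆ - ω b ⁅a, c⁆ := by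
    change ℓ ⁅σ ⁅a, b⁆, σ c⁆ = ℓ ⁅σ a, σ ⁅b, c⁆⁆ - ℓ ⁅σ b, σ ⁅a, c⁆⁆
    rw [← lie_skew, lie_σ_lie, lie_σ_lie, lie_σ_lie, lie_skew, lie_lie, map_sub]
  obtain ⟨f, hf⟩ := exists_dual_of_forall_cocycle cocycle
  calc ℓ ⁅x, y⁆ = ω (π x) (π y) :=
        congrArg ℓ (lie_eq_lie_of_map_eq_map hker (hσ _).symm (hσ _).symm)
    _ = 0 := by rw [hf, h, map_zero]

lemma cent_eq_comap_cent_map (hπ : Function.Surjective π) (hker : π.ker ≤ center K L) (x : L) :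
    cent K x = (cent K (π x)).comap (π : L →ₗ[K] M) := by
  ext y
  rw [Submodule.mem_comap, mem_cent_iff, mem_cent_iff]
  exact lie_eq_zero_iff_map_lie_map_eq_zero hπ hker

variable [IsAlgClosed K] [CharZero K]

theorem exists_finrank_cent_eq_and_forall_finrank_cent_le [FiniteDimensional K L]
    (hπ : Function.Surjective π) (hker : π.ker ≤ center K L)
    (t : LieSubalgebra K L) [t.IsCartanSubalgebra] :
    ∃ h : L, finrank K (cent K h) = finrank K t ∧
      ∀ x : L, finrank K (cent K h) ≤ finrank K (cent K x) := by
  have := isCartanSubalgebra_map t hπ hker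
  obtain ⟨h, hcent, hmin⟩ := exists_cent_eq_and_forall_finrank_cent_le (K := K) (t.map π)
  obtain ⟨h, rfl⟩ := hπ h
  refine ⟨h, ?_, fun x => ?_⟩
  · rw [cent_eq_comap_cent_map hπ hker, hcent, comap_map_eq_of_isCartanSubalgebra t hker]
    rfl
  · rw [cent_eq_comap_cent_map hπ hker, cent_eq_comap_cent_map hπ hker,
      finrank_comap_of_surjective hπ, finrank_comap_of_surjective hπ]
    exact Nat.add_le_add_right (hmin _) _

theorem eq_zero_of_forall_lie_eq_zero (hπ : Function.Surjective π) (hker : π.ker ≤ center K L)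
    {δ : L → K} (hδ : δ ∈ polyFun K L) (hne : ∃ x, δ x ≠ 0)
    (hinv : ∀ x, ∀ z ∈ π.ker, δ (x + z) = δ x) {φ : L × L → K} (hφ : φ ∈ polyFun K (L × L))
    (hvanish : ∀ x y : L, ⁅x, y⁆ = 0 → δ x ≠ 0 → φ (x, y) = 0) {x y : L} (hxy : ⁅x, y⁆ = 0) :
    φ (x, y) = 0 := by
  obtain ⟨σ, hσ⟩ := exists_linearMap_forall_map_eq hπ
  have lie_eq_zero_iff {x y : L} := lie_eq_zero_iff_map_lie_map_eq_zero hπ hker (x := x) (y := y)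
  have δ_eq {u v : L} (huv : π u = π v) : δ u = δ v := by
    rw [← hinv v (u - v) (by rw [LieHom.mem_ker, map_sub, huv, sub_self]), add_sub_cancel]
  let φ' : M × M → K := fun w => φ ((x - σ (π x), y - σ (π y)) + σ.prodMap σ w)
  have hφ' : φ' (π x, π y) = 0 := by
    refine eq_zero_of_forall_lie_eq_zero_of_isKilling (comp_linearMap_mem_polyFun hδ σ)
      (hne.imp' π fun u hu => by rwa [δ_eq (hσ (π u))])
      (comp_add_linearMap_mem_polyFun hφ _ (σ.prodMap σ)) (fun a b hab ha => ?_)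
      (lie_eq_zero_iff.1 hxy)
    refine hvanish _ _ (lie_eq_zero_iff.2 ?_) ?_
    · simpa [hσ] using hab
    · rwa [δ_eq (v := σ a) (by simp [hσ])]
  simpa [φ'] using hφ'

end CentralExtension

section Reductive

open LieAlgebra

variable (K L : Type*) [Field K] [LieRing L] [LieAlgebra K L]

/-- The quotient map of a Lie algebra by its center, as a morphism of Lie algebras. -/
def quotCenter : L →ₗ⁅K⁆ L ⧸ center K L :=
  { (center K L).toSubmodule.mkQ with map_lie' := rfl }

lemma quotCenter_surjective : Function.Surjective (quotCenter K L) := Submodule.mkQ_surjective _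

variable {K L}

lemma quotCenter_eq_zero_iff {x : L} : quotCenter K L x = 0 ↔ x ∈ center K L :=
  Submodule.Quotient.mk_eq_zero (center K L).toSubmodule

lemma ker_quotCenter : (quotCenter K L).ker = center K L := by
  ext x
  rw [LieHom.mem_ker, quotCenter_eq_zero_iff]

lemma isSolvable_of_lie_self_le_center {J : LieIdeal K L} (hJ : ⁅J, J⁆ ≤ center K L) :
    IsSolvable J := by
  refine IsSolvable.mk (R := K) (k := 2) ?_
  rw [LieIdeal.derivedSeries_eq_bot_iff, derivedSeriesOfIdeal_succ, derivedSeriesOfIdeal_succ,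
    derivedSeriesOfIdeal_zero, eq_bot_iff, LieSubmodule.lie_le_iff]
  intro x hx y _
  rw [mem_center_iff_forall_lie_eq_zero.1 (hJ hx)]
  exact LieSubmodule.zero_mem _

lemma lie_comap_quotCenter_le_center (I : LieIdeal K (L ⧸ center K L)) [IsLieAbelian I] :
    ⁅I.comap (quotCenter K L), I.comap (quotCenter K L)⁆ ≤ center K L := by
  rw [LieSubmodule.lie_le_iff]
  intro x hx y hy
  rw [← quotCenter_eq_zero_iff, LieHom.map_lie]
  exact congrArg Subtype.val (trivial_lie_zero I I ⟨_, LieIdeal.mem_comap.1 hx⟩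
    ⟨_, LieIdeal.mem_comap.1 hy⟩)

theorem hasTrivialRadical_quotient_center [FiniteDimensional K L]
    (hred : radical K L = center K L) : HasTrivialRadical K (L ⧸ center K L) := by
  rw [hasTrivialRadical_iff_no_abelian_ideals]
  intro I hI
  have hle : I.comap (quotCenter K L) ≤ center K L := by
    refine hred.le.trans' ((LieIdeal.solvable_iff_le_radical K L _).1 ?_)
    exact isSolvable_of_lie_self_le_center (lie_comap_quotCenter_le_center I)
  rw [eq_bot_iff]
  intro y hy
  obtain ⟨x, rfl⟩ := quotCenter_surjective K L y
  exact quotCenter_eq_zero_iff.2 (hle (LieIdeal.mem_comap.2 hy))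

end Reductive

/-! ### Moving centralizers to a fixed one -/

section Transport

open Module LieAlgebra

section Cramer

variable {K V W : Type*} [Field K] [AddCommGroup V] [Module K V] [AddCommGroup W] [Module K W]

lemma repr_eq_cramer_div_det {ι : Type*} [Fintype ι] [DecidableEq ι] (b : Basis ι K W)
    {A : Module.End K W} (hA : LinearMap.det A ≠ 0) (w : W) (i : ι) :
    b.repr w i = (LinearMap.toMatrix b b A).cramer (b.repr (A w)) i / LinearMap.det A := by
  rw [← LinearMap.toMatrix_mulVec_repr b b, Matrix.cramer_eq_adjugate_mulVec,
    Matrix.mulVec_mulVec, Matrix.adjugate_mul, Matrix.smul_mulVec, Matrix.one_mulVec,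
    LinearMap.det_toMatrix, Pi.smul_apply, smul_eq_mul, mul_div_cancel_left₀ _ hA]

variable [FiniteDimensional K W] {A : V → Module.End K W}

lemma linearMap_det_mem_polyFun
    (hA : ∀ (l : Dual K W) (w : W), (fun v => l (A v w)) ∈ polyFun K V) :
    (fun v => LinearMap.det (A v)) ∈ polyFun K V := by
  simpa only [LinearMap.det_toMatrix] using
    det_mem_polyFun (toMatrix_mem_polyFun hA (finBasis K W))

theorem exists_polyFun_div_det
    (hA : ∀ (l : Dual K W) (w : W), (fun v => l (A v w)) ∈ polyFun K V)
    {c y : V → W} (hc : ∀ l : Dual K W, (fun v => l (c v)) ∈ polyFun K V)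
    (hy : ∀ v, LinearMap.det (A v) ≠ 0 → A v (y v) = c v) (l : Dual K W) :
    ∃ p ∈ polyFun K V, ∀ v, LinearMap.det (A v) ≠ 0 → l (y v) = p v / LinearMap.det (A v) := by
  let b := finBasis K W
  refine ⟨fun v => ∑ i, (LinearMap.toMatrix b b (A v)).cramer (b.repr (c v)) i * l (b i),
    sum_mem_polyFun fun i _ => mul_mem
      (cramer_mem_polyFun (toMatrix_mem_polyFun hA b) (fun j => hc (b.coord j)) i)
      (const_mem_polyFun _), fun v hv => ?_⟩
  conv_lhs => rw [← b.sum_repr (y v), map_sum]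
  simp only [map_smul, smul_eq_mul, repr_eq_cramer_div_det b hv, hy v hv, Finset.sum_div,
    div_mul_eq_mul_div]

end Cramer

section GeneralizedInverse

variable {K V W : Type*} [Field K] [AddCommGroup V] [Module K V] [AddCommGroup W] [Module K W]

lemma exists_forall_apply_apply_apply_eq (f : V →ₗ[K] W) :
    ∃ s : W →ₗ[K] V, ∀ v, f (s (f v)) = f v := by
  obtain ⟨s₀, hs₀⟩ := f.rangeRestrict.exists_rightInverse_of_surjective f.range_rangeRestrict
  obtain ⟨s, hs⟩ := s₀.exists_extend
  refine ⟨s, fun v => ?_⟩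
  have hsv : s (f v) = s₀ (f.rangeRestrict v) := LinearMap.congr_fun hs (f.rangeRestrict v)
  rw [hsv]
  exact congrArg Subtype.val (LinearMap.congr_fun hs₀ (f.rangeRestrict v))

/-- A generalized inverse of `f`: a linear map `s` with `f ∘ s ∘ f = f`. -/
def generalizedInverse (f : V →ₗ[K] W) : W →ₗ[K] V :=
  (exists_forall_apply_apply_apply_eq f).choose

lemma apply_generalizedInverse_apply (f : V →ₗ[K] W) (v : V) :
    f (generalizedInverse f (f v)) = f v :=
  (exists_forall_apply_apply_apply_eq f).choose_spec v

end GeneralizedInverse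

variable (K : Type*) {L : Type*} [Field K] [LieRing L] [LieAlgebra K L] (h : L)

/-- The projection `y ↦ y - s ⁅h, y⁆` onto the centralizer of `h`, where `s` is a generalized
inverse of `ad h`. -/
def centProj : L →ₗ[K] cent K h :=
  (1 - generalizedInverse (ad K L h) * ad K L h).codRestrict (cent K h) fun y => by
    rw [cent, LinearMap.mem_ker, LinearMap.sub_apply, map_sub]
    exact sub_eq_zero.2 (apply_generalizedInverse_apply (ad K L h) y).symm

/-- The endomorphism `y ↦ y + s ⁅x - h, y⁆`, where `s` is a generalized inverse of `ad h`. If it is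
invertible and the centralizer of `h` has minimal dimension, it maps the centralizer of `x` onto
that of `h`. -/
def centTransport (x : L) : Module.End K L :=
  1 + generalizedInverse (ad K L h) * ad K L (x - h)

/-- The determinant whose nonvanishing at `x` makes `centTransport K h x` invertible. -/
def transportDet (x : L) : K :=
  LinearMap.det (centTransport K h x)

variable {K h} {x y : L}

lemma centTransport_apply (x y : L) : centTransport K h x y =
    y + generalizedInverse (ad K L h) ⁅x, y⁆ - generalizedInverse (ad K L h) ⁅h, y⁆ := by
  rw [add_sub_assoc, ← map_sub, ← sub_lie]
  rfl

lemma centTransport_apply_of_lie_eq_zero (hxy : ⁅x, y⁆ = 0) :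
    centTransport K h x y = centProj K h y := by
  rw [centTransport_apply, hxy, map_zero, add_zero]
  rfl

lemma centTransport_self : centTransport K h h = 1 := by
  simp [centTransport]

lemma centTransport_add_of_mem_center {z : L} (hz : z ∈ center K L) :
    centTransport K h (x + z) = centTransport K h x := by
  ext y
  rw [centTransport_apply, centTransport_apply, add_lie,
    mem_center_iff_forall_lie_eq_zero.1 hz, add_zero]

lemma dual_centTransport_mem_polyFun (l : Dual K L) (y : L) :
    (fun x => l (centTransport K h x y)) ∈ polyFun K L := by
  simp only [centTransport_apply, map_sub, map_add]
  exact sub_mem (add_mem (const_mem_polyFun _)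
    (dual_ad_mem_polyFun (l ∘ₗ generalizedInverse (ad K L h)) y)) (const_mem_polyFun _)

lemma transportDet_mem_polyFun [FiniteDimensional K L] : transportDet K h ∈ polyFun K L :=
  linearMap_det_mem_polyFun dual_centTransport_mem_polyFun

lemma transportDet_self : transportDet K h h = 1 := by
  rw [transportDet, centTransport_self, map_one]

lemma transportDet_add_of_mem_center {z : L} (hz : z ∈ center K L) :
    transportDet K h (x + z) = transportDet K h x := by
  rw [transportDet, centTransport_add_of_mem_center hz, transportDet]

variable [FiniteDimensional K L]

lemma isUnit_centTransport (hx : transportDet K h x ≠ 0) : IsUnit (centTransport K h x) :=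
  (LinearMap.isUnit_iff_isUnit_det _).2 hx.isUnit

lemma centTransport_injective (hx : transportDet K h x ≠ 0) :
    Function.Injective (centTransport K h x) :=
  ((Module.End.isUnit_iff _).1 (isUnit_centTransport hx)).1

theorem map_centTransport_cent (hx : transportDet K h x ≠ 0)
    (hmin : finrank K (cent K h) ≤ finrank K (cent K x)) :
    (cent K x).map (centTransport K h x) = cent K h := by
  refine Submodule.eq_of_le_of_finrank_le ?_ ?_
  · rintro _ ⟨y, hy, rfl⟩
    rw [centTransport_apply_of_lie_eq_zero (mem_cent_iff.1 hy)]
    exact (centProj K h y).2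
  · rwa [← (Submodule.equivMapOfInjective _ (centTransport_injective hx) _).finrank_eq]

end Transport

/-! ### The birational parametrization -/

section Parametrization

open Module LieAlgebra

variable (K : Type*) {L : Type*} [Field K] [LieRing L] [LieAlgebra K L] (h : L)

/-- The linear chart `(x, y) ↦ (x, y - s ⁅h, y⁆)` of the commuting variety. -/
def commChart : L × L →ₗ[K] L × cent K h :=
  LinearMap.id.prodMap (centProj K h)

/-- The inverse of `commChart` on commuting pairs: the second component of a pair over `(x, c)` is
the preimage of `c` under `centTransport K h x`. Where the latter is not invertible, `Ring.inverse`
is `0`. -/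
def commParam (p : L × cent K h) : L × L :=
  (p.1, Ring.inverse (centTransport K h p.1) p.2)

variable {K h}

variable [FiniteDimensional K L]

lemma centTransport_commParam {p : L × cent K h}
    (hp : transportDet K h p.1 ≠ 0) :
    centTransport K h p.1 (commParam K h p).2 = p.2 := by
  rw [commParam, ← Module.End.mul_apply, Ring.mul_inverse_cancel _ (isUnit_centTransport hp),
    Module.End.one_apply]

lemma lie_commParam {p : L × cent K h} (hp : transportDet K h p.1 ≠ 0)
    (hmin : finrank K (cent K h) ≤ finrank K (cent K p.1)) : ⁅p.1, (commParam K h p).2⁆ = 0 := by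
  have hmem : (p.2 : L) ∈ (cent K p.1).map (centTransport K h p.1) :=
    (map_centTransport_cent hp hmin).ge p.2.2
  obtain ⟨y, hy, hyp⟩ := hmem
  rw [← centTransport_commParam hp] at hyp
  rw [← centTransport_injective hp hyp]
  exact mem_cent_iff.1 hy

lemma commChart_commParam {p : L × cent K h} (hp : transportDet K h p.1 ≠ 0)
    (hmin : finrank K (cent K h) ≤ finrank K (cent K p.1)) :
    commChart K h (commParam K h p) = p := by
  refine Prod.ext rfl (Subtype.ext ?_)
  rw [← centTransport_commParam hp, centTransport_apply_of_lie_eq_zero (lie_commParam hp hmin)]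
  rfl

lemma commParam_commChart {z : L × L} (hz : transportDet K h z.1 ≠ 0) (hlie : ⁅z.1, z.2⁆ = 0) :
    commParam K h (commChart K h z) = z := by
  refine Prod.ext rfl (centTransport_injective hz ?_)
  rw [centTransport_apply_of_lie_eq_zero hlie]
  exact centTransport_commParam (p := commChart K h z) hz

lemma exists_polyFun_div_transportDet (l : Dual K (L × L)) :
    ∃ q ∈ polyFun K (L × cent K h), ∀ p, transportDet K h p.1 ≠ 0 →
      l (commParam K h p) = q p / transportDet K h p.1 := by
  obtain ⟨q, hq, hqp⟩ := exists_polyFun_div_det (A := fun p : L × cent K h => centTransport K h p.1)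
    (fun l y => comp_linearMap_mem_polyFun (dual_centTransport_mem_polyFun l y)
      (LinearMap.fst K L (cent K h)))
    (c := fun p => p.2) (y := fun p => (commParam K h p).2)
    (fun l => dual_mem_polyFun (l ∘ₗ (cent K h).subtype ∘ₗ LinearMap.snd K L (cent K h)))
    (fun p => centTransport_commParam) (l ∘ₗ LinearMap.inr K L L)
  refine ⟨fun p => transportDet K h p.1 * l (p.1, 0) + q p, add_mem (mul_mem
    (comp_linearMap_mem_polyFun transportDet_mem_polyFun (LinearMap.fst K L (cent K h)))
    (dual_mem_polyFun (l ∘ₗ LinearMap.inl K L L ∘ₗ LinearMap.fst K L (cent K h)))) hq,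
    fun p hp => ?_⟩
  calc l (commParam K h p) = l (p.1, 0) + l (0, (commParam K h p).2) := by
        rw [← map_add, Prod.mk_add_mk, add_zero, zero_add]
        rfl
    _ = (transportDet K h p.1 * l (p.1, 0) + q p) / transportDet K h p.1 := by
        rw [add_div, mul_div_cancel_left₀ _ hp]
        exact congrArg _ (hqp p hp)

end Parametrization

section Rationality

open Module LieAlgebra

variable (K : Type*) {L : Type*} [Field K] [LieRing L] [LieAlgebra K L] (h : L)

/-- The open subset `det T_x ≠ 0` of the commuting variety, on which `commChart` is invertible. -/
def regularPairs : Set (L × L) :=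
  {z | transportDet K h z.1 ≠ 0} ∩ commSet K L

variable {K h} {N : Type*} [AddCommGroup N] [Module K N] (ε : N ≃ₗ[K] L × cent K h)

/-- The image of `regularPairs` under `commChart`, in linear coordinates `ε` on `L × cent K h`. -/
def regularParams : Set N :=
  {w | transportDet K h (ε w).1 ≠ 0}

lemma mapsTo_commChart :
    Set.MapsTo (ε.symm ∘ commChart K h) (regularPairs K h) (regularParams ε) := by
  intro z hz
  rw [regularParams, Set.mem_ofPred_eq, Function.comp_apply, LinearEquiv.apply_symm_apply]
  exact hz.1

variable [FiniteDimensional K L]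

lemma exists_isOpen_zar_regularPairs :
    ∃ O : Set (L × L), @IsOpen _ (CV.zar K (L × L)) O ∧ regularPairs K h = O ∩ commSet K L :=
  ⟨_, isOpen_zar_ne_zero (comp_linearMap_mem_polyFun transportDet_mem_polyFun
    (LinearMap.fst K L L)), rfl⟩

lemma transportDet_comp_mem_polyFun : (fun w => transportDet K h (ε w).1) ∈ polyFun K N :=
  comp_linearMap_mem_polyFun transportDet_mem_polyFun
    (LinearMap.fst K L (cent K h) ∘ₗ ε.toLinearMap)

lemma leftInvOn_commParam_commChart :
    Set.LeftInvOn (commParam K h ∘ ε) (ε.symm ∘ commChart K h) (regularPairs K h) := by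
  intro z hz
  rw [Function.comp_apply, Function.comp_apply, LinearEquiv.apply_symm_apply,
    commParam_commChart hz.1 hz.2]

lemma mapsTo_commParam (hmin : ∀ x : L, finrank K (cent K h) ≤ finrank K (cent K x)) :
    Set.MapsTo (commParam K h ∘ ε) (regularParams ε) (regularPairs K h) :=
  fun _ hw => ⟨hw, lie_commParam hw (hmin _)⟩

lemma rightInvOn_commParam_commChart
    (hmin : ∀ x : L, finrank K (cent K h) ≤ finrank K (cent K x)) :
    Set.RightInvOn (commParam K h ∘ ε) (ε.symm ∘ commChart K h) (regularParams ε) := by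
  intro w hw
  rw [Function.comp_apply, Function.comp_apply, commChart_commParam hw (hmin _),
    LinearEquiv.symm_apply_apply]

theorem commSet_subset_closure_regularPairs [IsAlgClosed K] [CharZero K]
    {M : Type*} [LieRing M] [LieAlgebra K M] [FiniteDimensional K M] [IsKilling K M]
    {π : L →ₗ⁅K⁆ M} (hπ : Function.Surjective π) (hker : π.ker ≤ center K L) :
    commSet K L ⊆ @closure _ (CV.zar K (L × L)) (regularPairs K h) :=
  fun _ hz => mem_closure_zar_of_forall_polyFun fun _ hφ hvanish =>
    eq_zero_of_forall_lie_eq_zero hπ hker transportDet_mem_polyFun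
      ⟨h, by rw [transportDet_self]; exact one_ne_zero⟩
      (fun _ _ hz => transportDet_add_of_mem_center (hker hz)) hφ
      (fun x y hxy hx => hvanish (x, y) ⟨hx, hxy⟩) hz

variable [FiniteDimensional K N]

lemma isOpen_zar_regularParams : @IsOpen _ (CV.zar K N) (regularParams ε) :=
  isOpen_zar_ne_zero (transportDet_comp_mem_polyFun ε)

lemma dense_zar_regularParams [Infinite K] : @Dense _ (CV.zar K N) (regularParams ε) :=
  dense_zar_ne_zero (transportDet_comp_mem_polyFun ε)
    ⟨ε.symm (h, 0), by simp [transportDet_self]⟩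

lemma exists_evalP_div_commParam :
    ∃ (P : Free.ChooseBasisIndex K (L × L) → MvPolynomial (Free.ChooseBasisIndex K N) K)
      (Q : MvPolynomial (Free.ChooseBasisIndex K N) K),
      (∀ w ∈ regularParams ε, CV.evalP K N Q w ≠ 0) ∧
        ∀ w ∈ regularParams ε, ∀ i, CV.coordFn K (L × L) ((commParam K h ∘ ε) w) i =
          CV.evalP K N (P i) w / CV.evalP K N Q w := by
  refine exists_evalP_div_of_polyFun (transportDet_comp_mem_polyFun ε) (fun _ hw => hw) fun i => ?_
  obtain ⟨q, hq, hqp⟩ := exists_polyFun_div_transportDet (h := h)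
    ((Free.chooseBasis K (L × L)).coord i)
  exact ⟨_, comp_linearMap_mem_polyFun hq ε.toLinearMap, fun w hw => hqp _ hw⟩

end Rationality

/-- The commuting variety `C` is rational:  there are a dense open subset
`U` of `C`, a dense open subset `V` of the affine space `A^{dim g + rk g}`, and an
isomorphism of varieties `U ≅ V`, i.e. a bijection `f : U → V` such that `f` and its
inverse `e` are regular maps (each coordinate is given on `U`, resp. `V`, by a quotient of
polynomial functions whose denominator does not vanish there). -/
theorem commuting_variety_rational
    (hred : LieAlgebra.radical k g = LieAlgebra.center k g) (hnc : ¬IsLieAbelian g)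
    (t : LieSubalgebra k g) (ht : t.IsCartanSubalgebra) :
    ∃ (U : Set (g × g)) (W : Set (Fin (Module.finrank k g + Module.finrank k ↥t) → k))
      (f : g × g → (Fin (Module.finrank k g + Module.finrank k ↥t) → k))
      (e : (Fin (Module.finrank k g + Module.finrank k ↥t) → k) → g × g),
      -- `U` is a dense open subset of `C`
      U ⊆ commSet k g ∧
      (∃ O : Set (g × g), @IsOpen (g × g) (CV.zar k (g × g)) O ∧ U = O ∩ commSet k g) ∧
      commSet k g ⊆ @closure (g × g) (CV.zar k (g × g)) U ∧
      -- `W` is a dense open subset of affine space `A^{dim g + rk g}`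
      @IsOpen _ (CV.zar k (Fin (Module.finrank k g + Module.finrank k ↥t) → k)) W ∧
      @Dense _ (CV.zar k (Fin (Module.finrank k g + Module.finrank k ↥t) → k)) W ∧
      -- `f : U → W` is a bijection with inverse `e`
      Set.BijOn f U W ∧ (∀ z ∈ U, e (f z) = z) ∧ (∀ w ∈ W, f (e w) = w) ∧
      -- `f` is regular on `U`
      (∃ (p : Fin (Module.finrank k g + Module.finrank k ↥t) →
            MvPolynomial (Module.Free.ChooseBasisIndex k (g × g)) k)
         (q : MvPolynomial (Module.Free.ChooseBasisIndex k (g × g)) k),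
         (∀ z ∈ U, CV.evalP k (g × g) q z ≠ 0) ∧
         ∀ z ∈ U, ∀ j, f z j = CV.evalP k (g × g) (p j) z / CV.evalP k (g × g) q z) ∧
      -- `e` is regular on `W`
      (∃ (P : Module.Free.ChooseBasisIndex k (g × g) →
            MvPolynomial
              (Module.Free.ChooseBasisIndex k
                (Fin (Module.finrank k g + Module.finrank k ↥t) → k)) k)
         (Q : MvPolynomial
              (Module.Free.ChooseBasisIndex k
                (Fin (Module.finrank k g + Module.finrank k ↥t) → k)) k),
         (∀ w ∈ W, CV.evalP k _ Q w ≠ 0) ∧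
         ∀ w ∈ W, ∀ i, CV.coordFn k (g × g) (e w) i
            = CV.evalP k _ (P i) w / CV.evalP k _ Q w) := by
  have := hasTrivialRadical_quotient_center hred
  have hπ := quotCenter_surjective k g
  have hker := (ker_quotCenter (K := k) (L := g)).le
  obtain ⟨h, hrank, hmin⟩ := exists_finrank_cent_eq_and_forall_finrank_cent_le hπ hker t
  let ε : (Fin (Module.finrank k g + Module.finrank k t) → k) ≃ₗ[k] g × cent k h :=
    LinearEquiv.ofFinrankEq _ _ (by simp [hrank])
  have hef := leftInvOn_commParam_commChart ε
  have hfe := rightInvOn_commParam_commChart ε hmin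
  exact ⟨regularPairs k h, regularParams ε, ε.symm ∘ commChart k h, commParam k h ∘ ε,
    Set.inter_subset_right, exists_isOpen_zar_regularPairs,
    commSet_subset_closure_regularPairs hπ hker, isOpen_zar_regularParams ε,
    dense_zar_regularParams ε,
    Set.InvOn.bijOn ⟨hef, hfe⟩ (mapsTo_commChart ε) (mapsTo_commParam ε hmin), hef, hfe,
    exists_evalP_div_linearMap (ε.symm.toLinearMap ∘ₗ commChart k h) _,
    exists_evalP_div_commParam ε⟩
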